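/- arXiv:1401.6039 — 2 statements merged into one kernel-verified Lean document; each statement's English description precedes it below -/
import Mathlib

section
/- Sphere packing bound for constant composition codes over classical-quantum channels: for every classical-quantum channel x ↦ S_x with finite input alphabet X, every probability distribution P on X, every rate R > 0, and every ε with 0 < ε < R, the constant-composition reliability function satisfies E(R,P) ≤ E_sp^cc(R−ε, P), where E_sp^cc(R,P) = sup_{ρ ≥ 0} [E_0^cc(ρ,P) − ρR] and E_0^cc(ρ,P) = min over density operators F on H of −(1+ρ) Σ_{x∈X} P(x) log Tr(S_x^{1/(1+ρ)} F^{ρ/(1+ρ)}). -/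
open scoped BigOperators ComplexOrder
noncomputable section

namespace SPB

def negLog (t : ℝ) : EReal := if t ≤ 0 then (⊤ : EReal) else ((-Real.log t : ℝ) : EReal)

def mpow {ι : Type*} [Fintype ι] [DecidableEq ι] (A : Matrix ι ι ℂ) (r : ℝ) :
    Matrix ι ι ℂ :=
  if hA : A.IsHermitian then
    (hA.eigenvectorUnitary : Matrix ι ι ℂ) *
      Matrix.diagonal (fun i => ((if hA.eigenvalues i = 0 then (0 : ℝ)
        else hA.eigenvalues i ^ r : ℝ) : ℂ)) *
      (star (hA.eigenvectorUnitary : Matrix ι ι ℂ))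
  else 0

def IsDensity {ι : Type*} [Fintype ι] [DecidableEq ι] (A : Matrix ι ι ℂ) : Prop :=
  A.PosSemidef ∧ A.trace = 1

def IsProbDist {X : Type*} [Fintype X] (P : X → ℝ) : Prop :=
  (∀ x, 0 ≤ P x) ∧ ∑ x, P x = 1

def E0cc {X : Type*} [Fintype X] {d : ℕ} (S : X → Matrix (Fin d) (Fin d) ℂ)
    (ρ : ℝ) (P : X → ℝ) : EReal :=
  ⨅ F : {F : Matrix (Fin d) (Fin d) ℂ // IsDensity F},
    ((1 + ρ : ℝ) : EReal) *
      ∑ x, ((P x : ℝ) : EReal) *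
        negLog ((Matrix.trace (mpow (S x) (1 / (1 + ρ)) * mpow F.1 (ρ / (1 + ρ)))).re)

/-- The sphere packing exponent `E_sp^cc(R, P) = sup_{ρ ≥ 0} (E₀^cc(ρ,P) - ρ R)`. -/
def Espcc {X : Type*} [Fintype X] {d : ℕ} (S : X → Matrix (Fin d) (Fin d) ℂ)
    (R : ℝ) (P : X → ℝ) : EReal :=
  ⨆ ρ : {ρ : ℝ // 0 ≤ ρ}, E0cc S ρ.1 P - ((ρ.1 * R : ℝ) : EReal)

/-- The empirical composition (type) of a word. -/
def composition {X : Type*} [Fintype X] [DecidableEq X] {n : ℕ} (w : Fin n → X) :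
    X → ℝ :=
  fun x => ((Finset.univ.filter (fun i => w i = x)).card : ℝ) / (n : ℝ)

/-- The signal state of a codeword: the tensor (Kronecker) product of the letter states,
as a matrix indexed by `Fin n → Fin d`. -/
def signalState {X : Type*} {d n : ℕ} (S : X → Matrix (Fin d) (Fin d) ℂ)
    (w : Fin n → X) : Matrix (Fin n → Fin d) (Fin n → Fin d) ℂ :=
  Matrix.of fun i j => ∏ k, S (w k) (i k) (j k)

/-- A POVM (sub-measurement) with `M` outcomes. -/
def IsPOVM {ι : Type*} [Fintype ι] [DecidableEq ι] {M : ℕ}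
    (Pv : Fin M → Matrix ι ι ℂ) : Prop :=
  (∀ m, (Pv m).PosSemidef) ∧ (1 - ∑ m, Pv m).PosSemidef

/-- Maximum error probability of a code with decoding POVM `Pv`. -/
def maxError {X : Type*} {d n M : ℕ} (S : X → Matrix (Fin d) (Fin d) ℂ)
    (w : Fin M → Fin n → X)
    (Pv : Fin M → Matrix (Fin n → Fin d) (Fin n → Fin d) ℂ) : ℝ :=
  ⨆ m : Fin M, (1 - (Matrix.trace (Pv m * signalState S (w m))).re)

/-- `P_{e,max}^{(n)}(R, Q)`: the smallest maximum error probability of length-`n` codes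
with rate at least `R` all of whose codewords have composition `Q`. -/
def Pemax {X : Type*} [Fintype X] [DecidableEq X] {d : ℕ}
    (S : X → Matrix (Fin d) (Fin d) ℂ) (n : ℕ) (R : ℝ) (Q : X → ℝ) : ℝ :=
  sInf {e | ∃ (M : ℕ) (w : Fin M → Fin n → X)
      (Pv : Fin M → Matrix (Fin n → Fin d) (Fin n → Fin d) ℂ),
      Real.exp (n * R) ≤ M ∧ (∀ m, composition (w m) = Q) ∧ IsPOVM Pv ∧
      e = maxError S w Pv}

/-- The constant–composition reliability function `E(R,P)`: the limsup of
`-(1/n) log P_{e,max}^{(n)}(R,P_n)` over sequences of (realizable) compositions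
`P_n` tending to `P`. -/
def relE {X : Type*} [Fintype X] [DecidableEq X] {d : ℕ}
    (S : X → Matrix (Fin d) (Fin d) ℂ) (R : ℝ) (P : X → ℝ) : EReal :=
  ⨆ Pn : {Pn : ℕ → X → ℝ // Filter.Tendsto Pn Filter.atTop (nhds P) ∧
      ∀ n, ∃ w : Fin n → X, composition w = Pn n},
    Filter.limsup
      (fun n : ℕ => (((n : ℝ)⁻¹ : ℝ) : EReal) * negLog (Pemax S n R (Pn.1 n)))
      Filter.atTop

lemma sum_pi_prod {Z : Type*} [Fintype Z] {n : ℕ} (f : Fin n → Z → ℝ) :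
    ∑ z : Fin n → Z, ∏ k, f k (z k) = ∏ k, ∑ y, f k y := by
  classical
  rw [Finset.prod_univ_sum, Fintype.piFinset_univ]

lemma chernoff {X Z : Type*} [Fintype X] [Fintype Z] (v g : X → Z → ℝ)
    (hv0 : ∀ x z, 0 ≤ v x z) (hv1 : ∀ x, ∑ z, v x z = 1)
    (hg : ∀ x, ∑ z, v x z * g x z = 0) (δ : ℝ) (hδ : 0 < δ) :
    ∃ N : ℕ, ∀ n : ℕ, N ≤ n → ∀ w : Fin n → X,
      ∑ z : Fin n → Z, (if (n : ℝ) * δ ≤ ∑ k, g (w k) (z k) then ∏ k, v (w k) (z k) else 0)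
        ≤ 1 / 4 := by
  obtain ⟨C, hC0, hC⟩ : ∃ C : ℝ, 0 < C ∧ ∀ x z, |g x z| ≤ C := by
    refine ⟨∑ x, ∑ z, |g x z| + 1, by positivity, fun x z => ?_⟩
    have h1 : |g x z| ≤ ∑ z, |g x z| :=
      Finset.single_le_sum (f := fun z => |g x z|) (fun _ _ => abs_nonneg _) (Finset.mem_univ z)
    have h2 : ∑ z, |g x z| ≤ ∑ x, ∑ z, |g x z| :=
      Finset.single_le_sum (f := fun x => ∑ z, |g x z|)
        (fun _ _ => Finset.sum_nonneg fun _ _ => abs_nonneg _) (Finset.mem_univ x)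
    linarith
  set t : ℝ := min (1 / C) (δ / (2 * C ^ 2)) with ht
  have ht0 : 0 < t := by rw [ht]; positivity
  have htC : t * C ≤ 1 := by
    have : t ≤ 1 / C := min_le_left _ _
    rwa [le_div_iff₀ hC0] at this
  have htd : t ^ 2 * C ^ 2 ≤ t * δ / 2 := by
    have : t ≤ δ / (2 * C ^ 2) := min_le_right _ _
    rw [le_div_iff₀ (by positivity)] at this
    nlinarith
  have hmgf : ∀ x, ∑ z, v x z * Real.exp (t * g x z) ≤ Real.exp (t * δ / 2) := by
    intro x
    have h1 : ∀ z, v x z * Real.exp (t * g x z) ≤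
        v x z + t * (v x z * g x z) + v x z * (t ^ 2 * C ^ 2) := by
      intro z
      have hab : |t * g x z| ≤ t * C := by
        rw [abs_mul, abs_of_pos ht0]
        exact mul_le_mul_of_nonneg_left (hC x z) ht0.le
      have h3 := Real.abs_exp_sub_one_sub_id_le (hab.trans htC)
      have h4 := (abs_le.mp h3).2
      have h5 : (t * g x z) ^ 2 ≤ t ^ 2 * C ^ 2 := by
        rw [← sq_abs, ← mul_pow]
        exact pow_le_pow_left₀ (abs_nonneg _) hab 2
      have h6 : Real.exp (t * g x z) ≤ 1 + t * g x z + t ^ 2 * C ^ 2 := by linarith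
      calc _ ≤ v x z * (1 + t * g x z + t ^ 2 * C ^ 2) :=
            mul_le_mul_of_nonneg_left h6 (hv0 x z)
        _ = _ := by ring
    calc _ ≤ ∑ z, (v x z + t * (v x z * g x z) + v x z * (t ^ 2 * C ^ 2)) :=
          Finset.sum_le_sum fun z _ => h1 z
      _ = 1 + t ^ 2 * C ^ 2 := by
          rw [Finset.sum_add_distrib, Finset.sum_add_distrib, ← Finset.mul_sum, ← Finset.sum_mul,
            hg, hv1]; ring
      _ ≤ Real.exp (t ^ 2 * C ^ 2) := by
          have := Real.add_one_le_exp (t ^ 2 * C ^ 2); linarith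
      _ ≤ _ := Real.exp_le_exp.mpr htd
  obtain ⟨N, hN⟩ := exists_nat_ge (Real.log 4 / (t * δ / 2))
  refine ⟨N, fun n hn w => ?_⟩
  have hn' : Real.log 4 ≤ n * (t * δ / 2) := by
    have : Real.log 4 / (t * δ / 2) ≤ n := hN.trans (by exact_mod_cast hn)
    rwa [div_le_iff₀ (by positivity)] at this
  calc _ ≤ ∑ z : Fin n → Z, Real.exp (-(t * (n * δ))) *
          ∏ k, (v (w k) (z k) * Real.exp (t * g (w k) (z k))) := by
        refine Finset.sum_le_sum fun z _ => ?_
        have hp : 0 ≤ ∏ k, v (w k) (z k) := Finset.prod_nonneg fun k _ => hv0 _ _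
        have heq : Real.exp (-(t * (n * δ))) *
          ∏ k, (v (w k) (z k) * Real.exp (t * g (w k) (z k))) =
            (∏ k, v (w k) (z k)) * Real.exp (t * (∑ k, g (w k) (z k) - n * δ)) := by
          rw [Finset.prod_mul_distrib, ← Real.exp_sum, ← Finset.mul_sum, mul_left_comm,
            ← Real.exp_add]
          congr 2; ring
        rw [heq]
        split_ifs with h
        · have : 1 ≤ Real.exp (t * (∑ k, g (w k) (z k) - n * δ)) :=
            Real.one_le_exp (mul_nonneg ht0.le (by linarith))
          nlinarith
        · positivity
    _ = Real.exp (-(t * (n * δ))) * ∏ k, ∑ y, (v (w k) y * Real.exp (t * g (w k) y)) := by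
        rw [← Finset.mul_sum, sum_pi_prod (fun k y => v (w k) y * Real.exp (t * g (w k) y))]
    _ ≤ Real.exp (-(t * (n * δ))) * ∏ k : Fin n, Real.exp (t * δ / 2) := by
        refine mul_le_mul_of_nonneg_left (Finset.prod_le_prod (fun k _ => ?_) fun k _ => hmgf _)
          (Real.exp_nonneg _)
        exact Finset.sum_nonneg fun y _ => mul_nonneg (hv0 _ _) (Real.exp_nonneg _)
    _ = Real.exp (-(n * (t * δ / 2))) := by
        rw [Finset.prod_const, Finset.card_univ, Fintype.card_fin, ← Real.exp_nat_mul,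
          ← Real.exp_add]
        congr 1; ring
    _ ≤ Real.exp (-Real.log 4) := Real.exp_le_exp.mpr (by linarith)
    _ = 1 / 4 := by rw [Real.exp_neg, Real.exp_log (by norm_num)]; norm_num

lemma classical_converse {X Z : Type*} [Fintype X] [Fintype Z] (p q v : X → Z → ℝ)
    (hp0 : ∀ x z, 0 ≤ p x z) (hq0 : ∀ x z, 0 ≤ q x z)
    (hv0 : ∀ x z, 0 ≤ v x z) (hv1 : ∀ x, ∑ z, v x z = 1)
    (hvp : ∀ x z, 0 < v x z → 0 < p x z) (hvq : ∀ x z, 0 < v x z → 0 < q x z)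
    (δ : ℝ) (hδ : 0 < δ) :
    ∃ N : ℕ, ∀ n : ℕ, N ≤ n → ∀ w : Fin n → X, ∀ γ : ℝ, 0 ≤ γ →
      1 / 2 * min (Real.exp (-(∑ k, ∑ z, v (w k) z * Real.log (v (w k) z / p (w k) z)) - n * δ))
        (γ * Real.exp (-(∑ k, ∑ z, v (w k) z * Real.log (v (w k) z / q (w k) z)) - n * δ)) ≤
      ∑ z : Fin n → Z, min (∏ k, p (w k) (z k)) (γ * ∏ k, q (w k) (z k)) := by
  set a : X → ℝ := fun x => ∑ z, v x z * Real.log (v x z / p x z) with ha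
  set b : X → ℝ := fun x => ∑ z, v x z * Real.log (v x z / q x z) with hb
  obtain ⟨N1, h1⟩ := chernoff v (fun x z => Real.log (v x z / p x z) - a x) hv0 hv1
    (fun x => by simp only [mul_sub, Finset.sum_sub_distrib, ← Finset.sum_mul, hv1, ha]; ring) δ hδ
  obtain ⟨N2, h2⟩ := chernoff v (fun x z => Real.log (v x z / q x z) - b x) hv0 hv1
    (fun x => by simp only [mul_sub, Finset.sum_sub_distrib, ← Finset.sum_mul, hv1, hb]; ring) δ hδ
  refine ⟨max N1 N2, fun n hn w γ hγ => ?_⟩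
  have h1 := h1 n (le_trans (le_max_left _ _) hn) w
  have h2 := h2 n (le_trans (le_max_right _ _) hn) w
  set m := min (Real.exp (-(∑ k, a (w k)) - n * δ)) (γ * Real.exp (-(∑ k, b (w k)) - n * δ)) with hm
  have hm0 : 0 ≤ m := le_min (Real.exp_nonneg _) (by positivity)
  -- pointwise
  have key : ∀ z : Fin n → Z, m * (∏ k, v (w k) (z k)
      - (if (n : ℝ) * δ ≤ ∑ k, (Real.log (v (w k) (z k) / p (w k) (z k)) - a (w k))
          then ∏ k, v (w k) (z k) else 0)
      - (if (n : ℝ) * δ ≤ ∑ k, (Real.log (v (w k) (z k) / q (w k) (z k)) - b (w k))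
          then ∏ k, v (w k) (z k) else 0)) ≤
      min (∏ k, p (w k) (z k)) (γ * ∏ k, q (w k) (z k)) := by
    intro z
    have hV : 0 ≤ ∏ k, v (w k) (z k) := Finset.prod_nonneg fun k _ => hv0 _ _
    have hP : 0 ≤ ∏ k, p (w k) (z k) := Finset.prod_nonneg fun k _ => hp0 _ _
    have hQ : 0 ≤ ∏ k, q (w k) (z k) := Finset.prod_nonneg fun k _ => hq0 _ _
    have hR : 0 ≤ min (∏ k, p (w k) (z k)) (γ * ∏ k, q (w k) (z k)) :=
      le_min hP (mul_nonneg hγ hQ)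
    split_ifs with c1 c2 c2
    · refine le_trans ?_ hR
      nlinarith
    · simpa using hR
    · simpa using hR
    · simp only [sub_zero]
      by_cases hz : ∏ k, v (w k) (z k) = 0
      · rw [hz, mul_zero]; exact hR
      have hvk : ∀ k, 0 < v (w k) (z k) := fun k =>
        lt_of_le_of_ne (hv0 _ _) (Ne.symm (fun h => hz (Finset.prod_eq_zero (Finset.mem_univ k) h)))
      have aux : ∀ (u : X → Z → ℝ) (c : X → ℝ), (∀ x z, 0 < v x z → 0 < u x z) →
          ¬ ((n : ℝ) * δ ≤ ∑ k, (Real.log (v (w k) (z k) / u (w k) (z k)) - c (w k))) →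
          Real.exp (-(∑ k, c (w k)) - n * δ) * ∏ k, v (w k) (z k) ≤ ∏ k, u (w k) (z k) := by
        intro u c hu hc
        have hV' : ∏ k, v (w k) (z k) =
            (∏ k, u (w k) (z k)) * Real.exp (∑ k, Real.log (v (w k) (z k) / u (w k) (z k))) := by
          rw [Real.exp_sum, ← Finset.prod_mul_distrib]
          refine Finset.prod_congr rfl fun k _ => ?_
          have := hu _ _ (hvk k)
          rw [Real.exp_log (div_pos (hvk k) this)]
          field_simp
        rw [hV', mul_left_comm, ← Real.exp_add]
        have hU : 0 ≤ ∏ k, u (w k) (z k) := Finset.prod_nonneg fun k _ => (hu _ _ (hvk k)).le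
        refine mul_le_of_le_one_right hU (Real.exp_le_one_iff.mpr ?_)
        rw [Finset.sum_sub_distrib] at hc
        linarith
      refine le_min ?_ ?_
      · exact (mul_le_mul_of_nonneg_right (min_le_left _ _) hV).trans (aux p a hvp c1)
      · calc _ ≤ (γ * Real.exp (-(∑ k, b (w k)) - n * δ)) * ∏ k, v (w k) (z k) :=
              mul_le_mul_of_nonneg_right (min_le_right _ _) hV
          _ = γ * (Real.exp (-(∑ k, b (w k)) - n * δ) * ∏ k, v (w k) (z k)) := by ring
          _ ≤ _ := mul_le_mul_of_nonneg_left (aux q b hvq c2) hγ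
  have hsum := Finset.sum_le_sum fun z (_ : z ∈ (Finset.univ : Finset (Fin n → Z))) => key z
  refine le_trans ?_ hsum
  rw [← Finset.mul_sum, Finset.sum_sub_distrib, Finset.sum_sub_distrib,
    sum_pi_prod (fun k y => v (w k) y)]
  simp only [hv1, Finset.prod_const_one]
  nlinarith


def tw {Z : Type*} (p q : Z → ℝ) (ρ : ℝ) (z : Z) : ℝ := p z ^ (1 / (1 + ρ)) * q z ^ (ρ / (1 + ρ))

def tA {Z : Type*} [Fintype Z] (p q : Z → ℝ) (ρ : ℝ) : ℝ := ∑ z, tw p q ρ z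

def tV {Z : Type*} [Fintype Z] (p q : Z → ℝ) (ρ : ℝ) (z : Z) : ℝ := tw p q ρ z / tA p q ρ

def kl {Z : Type*} [Fintype Z] (v p : Z → ℝ) : ℝ := ∑ z, v z * Real.log (v z / p z)

structure Good {Z : Type*} [Fintype Z] (p q : Z → ℝ) : Prop where
  hp0 : ∀ z, 0 ≤ p z
  hq0 : ∀ z, 0 ≤ q z
  hpq : ∀ z, 0 < p z → 0 < q z
  hp1 : ∑ z, p z = 1

section tilt
variable {Z : Type*} [Fintype Z] {p q : Z → ℝ}

lemma Good.tw_nonneg (h : Good p q) (ρ : ℝ) (z : Z) : 0 ≤ tw p q ρ z :=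
  mul_nonneg (Real.rpow_nonneg (h.hp0 z) _) (Real.rpow_nonneg (h.hq0 z) _)

lemma Good.tw_pos (h : Good p q) (ρ : ℝ) {z : Z} (hz : 0 < p z) : 0 < tw p q ρ z :=
  mul_pos (Real.rpow_pos_of_pos hz _) (Real.rpow_pos_of_pos (h.hpq z hz) _)

lemma tw_zero {ρ : ℝ} (hρ : 0 ≤ ρ) {z : Z} (hz : p z = 0) : tw p q ρ z = 0 := by
  unfold tw
  rw [hz, Real.zero_rpow (by positivity), zero_mul]

lemma Good.tA_pos (h : Good p q) (ρ : ℝ) : 0 < tA p q ρ := by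
  obtain ⟨z, hz⟩ : ∃ z, 0 < p z := by
    by_contra hc
    push Not at hc
    have : ∑ z, p z = 0 := Finset.sum_eq_zero fun z _ => le_antisymm (hc z) (h.hp0 z)
    rw [h.hp1] at this; exact one_ne_zero this
  exact Finset.sum_pos' (fun z _ => h.tw_nonneg ρ z) ⟨z, Finset.mem_univ z, h.tw_pos ρ hz⟩

lemma Good.tV_nonneg (h : Good p q) (ρ : ℝ) (z : Z) : 0 ≤ tV p q ρ z :=
  div_nonneg (h.tw_nonneg ρ z) (h.tA_pos ρ).le

lemma Good.tV_sum (h : Good p q) (ρ : ℝ) : ∑ z, tV p q ρ z = 1 := by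
  unfold tV
  rw [← Finset.sum_div]
  exact div_self (h.tA_pos ρ).ne'

lemma Good.tV_pos_p (h : Good p q) {ρ : ℝ} (hρ : 0 ≤ ρ) {z : Z} (hz : 0 < tV p q ρ z) : 0 < p z := by
  refine lt_of_le_of_ne (h.hp0 z) fun h0 => ?_
  unfold tV at hz
  rw [tw_zero hρ h0.symm, zero_div] at hz
  exact lt_irrefl _ hz

lemma kl_nonneg {v u : Z → ℝ} (hv0 : ∀ z, 0 ≤ v z) (hv1 : ∑ z, v z = 1) (hu0 : ∀ z, 0 ≤ u z)
    (hu1 : ∑ z, u z = 1) (hvu : ∀ z, 0 < v z → 0 < u z) : 0 ≤ kl v u := by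
  have : ∀ z, v z - u z ≤ v z * Real.log (v z / u z) := by
    intro z
    rcases (hv0 z).eq_or_lt with h | h
    · rw [← h]; simpa using hu0 z
    · have hu := hvu z h
      have h1 := Real.log_le_sub_one_of_pos (div_pos hu h)
      have h2 : Real.log (v z / u z) = - Real.log (u z / v z) := by
        rw [← Real.log_inv, inv_div]
      rw [h2]
      have h3 : v z * (u z / v z - 1) = u z - v z := by field_simp
      nlinarith
  have h := Finset.sum_le_sum fun z (_ : z ∈ Finset.univ) => this z
  rw [Finset.sum_sub_distrib, hv1, hu1] at h
  unfold kl
  linarith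

lemma Good.decomp (h : Good p q) {ρ : ℝ} (hρ : 0 ≤ ρ) {v : Z → ℝ} (hv0 : ∀ z, 0 ≤ v z)
    (hv1 : ∑ z, v z = 1) (hvp : ∀ z, 0 < v z → 0 < p z) :
    kl v p + ρ * kl v q = (1 + ρ) * kl v (tV p q ρ) - (1 + ρ) * Real.log (tA p q ρ) := by
  have hA := h.tA_pos ρ
  have : ∀ z, v z * Real.log (v z / p z) + ρ * (v z * Real.log (v z / q z)) =
      (1 + ρ) * (v z * Real.log (v z / tV p q ρ z)) - v z * ((1 + ρ) * Real.log (tA p q ρ)) := by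
    intro z
    rcases (hv0 z).eq_or_lt with hz | hz
    · rw [← hz]; simp
    · have hp := hvp z hz
      have hq := h.hpq z hp
      have hw := h.tw_pos ρ hp
      have hlw : Real.log (tw p q ρ z) = 1 / (1 + ρ) * Real.log (p z)
          + ρ / (1 + ρ) * Real.log (q z) := by
        unfold tw
        rw [Real.log_mul (Real.rpow_pos_of_pos hp _).ne' (Real.rpow_pos_of_pos hq _).ne',
          Real.log_rpow hp, Real.log_rpow hq]
      unfold tV
      rw [Real.log_div hz.ne' hp.ne', Real.log_div hz.ne' hq.ne',
        Real.log_div hz.ne' (div_pos hw hA).ne', Real.log_div hw.ne' hA.ne', hlw]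
      have : (1 + ρ) ≠ 0 := by positivity
      field_simp
      ring
  unfold kl
  rw [Finset.mul_sum, Finset.mul_sum, ← Finset.sum_add_distrib, Finset.sum_congr rfl fun z _ => this z,
    Finset.sum_sub_distrib, ← Finset.sum_mul, hv1, one_mul]

lemma kl_self (v : Z → ℝ) : kl v v = 0 := by
  refine Finset.sum_eq_zero fun z _ => ?_
  by_cases h : v z = 0
  · simp [h]
  · simp [div_self h]

lemma Good.tilt_eq (h : Good p q) {ρ : ℝ} (hρ : 0 ≤ ρ) :
    kl (tV p q ρ) p + ρ * kl (tV p q ρ) q = - ((1 + ρ) * Real.log (tA p q ρ)) := by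
  rw [h.decomp hρ (h.tV_nonneg ρ) (h.tV_sum ρ) (fun z => h.tV_pos_p hρ), kl_self]; ring

lemma Good.gibbs (h : Good p q) {ρ : ℝ} (hρ : 0 ≤ ρ) {v : Z → ℝ} (hv0 : ∀ z, 0 ≤ v z)
    (hv1 : ∑ z, v z = 1) (hvp : ∀ z, 0 < v z → 0 < p z) :
    - ((1 + ρ) * Real.log (tA p q ρ)) ≤ kl v p + ρ * kl v q := by
  rw [h.decomp hρ hv0 hv1 hvp]
  have := kl_nonneg hv0 hv1 (h.tV_nonneg ρ) (h.tV_sum ρ)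
    (fun z hz => div_pos (h.tw_pos ρ (hvp z hz)) (h.tA_pos ρ))
  nlinarith

lemma Good.concave (h : Good p q) :
    ConcaveOn ℝ (Set.Ici (0 : ℝ)) (fun ρ => - ((1 + ρ) * Real.log (tA p q ρ))) := by
  refine ⟨convex_Ici 0, ?_⟩
  intro x hx y hy a b ha hb hab
  simp only [Set.mem_Ici, smul_eq_mul] at *
  have hz : 0 ≤ a * x + b * y := by positivity
  have h1 := h.tilt_eq hz
  have h2 := h.gibbs hx (h.tV_nonneg (a * x + b * y)) (h.tV_sum _) (fun z => h.tV_pos_p hz)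
  have h3 := h.gibbs hy (h.tV_nonneg (a * x + b * y)) (h.tV_sum _) (fun z => h.tV_pos_p hz)
  rw [← h1]
  set D := kl (tV p q (a * x + b * y)) p
  set D' := kl (tV p q (a * x + b * y)) q
  have : D + (a * x + b * y) * D' = a * (D + x * D') + b * (D + y * D') := by
    have : D = (a + b) * D := by rw [hab, one_mul]
    linear_combination this
  rw [this]
  exact add_le_add (mul_le_mul_of_nonneg_left h2 ha) (mul_le_mul_of_nonneg_left h3 hb)

lemma Good.tw_cont (h : Good p q) (z : Z) : ContinuousOn (fun ρ => tw p q ρ z) (Set.Ici 0) := by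
  rcases (h.hp0 z).eq_or_lt with hz | hz
  · refine continuousOn_const (c := (0 : ℝ)) |>.congr fun ρ hρ => ?_
    exact tw_zero hρ hz.symm
  · have hq := h.hpq z hz
    have hne : ∀ ρ ∈ Set.Ici (0 : ℝ), (1 + ρ) ≠ 0 := fun ρ hρ => by
      have : (0 : ℝ) ≤ ρ := hρ
      positivity
    have e1 : ContinuousOn (fun ρ : ℝ => 1 / (1 + ρ)) (Set.Ici 0) :=
      continuousOn_const.div (by fun_prop) hne
    have e2 : ContinuousOn (fun ρ : ℝ => ρ / (1 + ρ)) (Set.Ici 0) :=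
      continuousOn_id.div (by fun_prop) hne
    exact (continuousOn_const.rpow e1 fun _ _ => Or.inl hz.ne').mul
      (continuousOn_const.rpow e2 fun _ _ => Or.inl hq.ne')

lemma Good.tA_cont (h : Good p q) : ContinuousOn (fun ρ => tA p q ρ) (Set.Ici 0) :=
  continuousOn_finsetSum _ fun z _ => h.tw_cont z

lemma Good.G_cont (h : Good p q) :
    ContinuousOn (fun ρ => - ((1 + ρ) * Real.log (tA p q ρ))) (Set.Ici 0) := by
  refine ContinuousOn.neg (ContinuousOn.mul (by fun_prop) ?_)
  exact h.tA_cont.log fun ρ _ => (h.tA_pos ρ).ne'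

lemma Good.klq_cont (h : Good p q) :
    ContinuousOn (fun ρ => kl (tV p q ρ) q) (Set.Ici 0) := by
  refine continuousOn_finsetSum _ fun z _ => ?_
  rcases (h.hp0 z).eq_or_lt with hz | hz
  · refine continuousOn_const (c := (0 : ℝ)) |>.congr fun ρ hρ => ?_
    simp [tV, tw_zero hρ hz.symm]
  · have hq := h.hpq z hz
    have c : ContinuousOn (fun ρ => tV p q ρ z) (Set.Ici 0) :=
      (h.tw_cont z).div h.tA_cont fun ρ _ => (h.tA_pos ρ).ne'
    refine c.mul ((c.div_const _).log fun ρ _ => ?_)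
    exact (div_pos (div_pos (h.tw_pos ρ hz) (h.tA_pos ρ)) hq).ne'

lemma Good.klp_nonneg (h : Good p q) {ρ : ℝ} (hρ : 0 ≤ ρ) : 0 ≤ kl (tV p q ρ) p :=
  kl_nonneg (h.tV_nonneg ρ) (h.tV_sum ρ) h.hp0 h.hp1 fun _ => h.tV_pos_p hρ

end tilt

/-- choice of the tilting parameter -/
lemma exists_tilt {X Z : Type*} [Fintype X] [Fintype Z] (P : X → ℝ) (hP : ∀ x, 0 ≤ P x)
    (p q : X → Z → ℝ) (h : ∀ x, Good (p x) (q x)) (r r' t : ℝ) (hr : r < r')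
    (hf : ∀ ρ, 0 ≤ ρ → ∑ x, P x * (- ((1 + ρ) * Real.log (tA (p x) (q x) ρ))) - ρ * r ≤ t) :
    ∃ ρ, 0 ≤ ρ ∧ ∑ x, P x * kl (tV (p x) (q x) ρ) (p x) ≤ t ∧
      ∑ x, P x * kl (tV (p x) (q x) ρ) (q x) ≤ r' := by
  set DP : ℝ → ℝ := fun ρ => ∑ x, P x * kl (tV (p x) (q x) ρ) (p x) with hDP
  set DQ : ℝ → ℝ := fun ρ => ∑ x, P x * kl (tV (p x) (q x) ρ) (q x) with hDQ
  have hDP0 : ∀ ρ, 0 ≤ ρ → 0 ≤ DP ρ := fun ρ hρ =>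
    Finset.sum_nonneg fun x _ => mul_nonneg (hP x) ((h x).klp_nonneg hρ)
  have hid : ∀ ρ, 0 ≤ ρ → DP ρ + ρ * (DQ ρ - r) ≤ t := by
    intro ρ hρ
    refine le_trans (le_of_eq ?_) (hf ρ hρ)
    rw [Finset.sum_congr rfl fun x _ => by rw [← (h x).tilt_eq hρ]]
    simp only [hDP, hDQ, mul_add, Finset.sum_add_distrib, mul_sub, Finset.mul_sum]
    have : ∀ x, P x * (ρ * kl (tV (p x) (q x) ρ) (q x)) = ρ * (P x * kl (tV (p x) (q x) ρ) (q x)) :=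
      fun x => by ring
    simp only [this]; ring
  have hcont : ContinuousOn DQ (Set.Ici 0) :=
    continuousOn_finsetSum _ fun x _ => continuousOn_const.mul (h x).klq_cont
  by_cases h0 : DQ 0 ≤ r'
  · refine ⟨0, le_rfl, ?_, h0⟩
    have := hid 0 le_rfl
    simpa using this
  push Not at h0
  obtain ⟨ρ1, hρ1, h1⟩ : ∃ ρ, 0 ≤ ρ ∧ DQ ρ < r' := by
    by_contra hc
    push Not at hc
    set ρ := (|t| + 1) / (r' - r)
    have hρ : 0 ≤ ρ := div_nonneg (by positivity) (by linarith)
    have a1 := hid ρ hρ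
    have a2 := hc ρ hρ
    have a3 := hDP0 ρ hρ
    have a4 : ρ * (r' - r) = |t| + 1 := div_mul_cancel₀ _ (by linarith)
    have := le_abs_self t
    nlinarith
  have hivt := intermediate_value_Icc' hρ1 (hcont.mono Set.Icc_subset_Ici_self)
  obtain ⟨ρ, hρ, heq⟩ := hivt ⟨h1.le, h0.le⟩
  refine ⟨ρ, hρ.1, ?_, heq.le⟩
  have := hid ρ hρ.1
  rw [heq] at this
  have : 0 ≤ ρ * (r' - r) := mul_nonneg hρ.1 (by linarith)
  change DP ρ ≤ t
  linarith


open Matrix in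
lemma trace_mul_spec {ι : Type*} [Fintype ι] [DecidableEq ι] (M U : Matrix ι ι ℂ) (a : ι → ℂ) :
    (M * (U * diagonal a * Uᴴ)).trace = ∑ i, (Uᴴ * M * U) i i * a i := by
  rw [← Matrix.mul_assoc, Matrix.trace_mul_comm, ← Matrix.mul_assoc, ← Matrix.mul_assoc]
  simp [Matrix.trace, Matrix.mul_diagonal]

open Matrix in
lemma diag_sq {ι : Type*} [Fintype ι] [DecidableEq ι] (K U V : Matrix ι ι ℂ) (hK : Kᴴ = K)
    (hV : V * Vᴴ = 1) (i : ι) :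
    (Uᴴ * (K * K) * U) i i = ((∑ j, ‖(Uᴴ * K * V) i j‖ ^ 2 : ℝ) : ℂ) := by
  have : Uᴴ * (K * K) * U = (Uᴴ * K * V) * (Uᴴ * K * V)ᴴ := by
    rw [conjTranspose_mul, conjTranspose_mul, conjTranspose_conjTranspose, hK]
    calc _ = Uᴴ * K * 1 * (K * U) := by simp only [Matrix.mul_assoc, Matrix.one_mul]
      _ = _ := by rw [← hV]; simp only [Matrix.mul_assoc]
  rw [this, Matrix.mul_apply]
  push_cast
  refine Finset.sum_congr rfl fun j _ => ?_
  rw [conjTranspose_apply, Complex.star_def, Complex.mul_conj, Complex.normSq_eq_norm_sq]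
  push_cast; rfl

open Matrix in
lemma effect_sq {ι : Type*} [Fintype ι] [DecidableEq ι] (K L : Matrix ι ι ℂ) (hK : K.PosSemidef)
    (hL : L.PosSemidef) (hKL : K + L = 1) : (K - K * K).PosSemidef := by
  have hL' : L = 1 - K := by rw [← hKL]; abel
  have : K - K * K = Kᴴ * L * K + Lᴴ * K * L := by
    rw [hK.1.eq, hL.1.eq, hL']
    noncomm_ring
  rw [this]
  exact (hL.conjTranspose_mul_mul_same K).add (hK.conjTranspose_mul_mul_same L)

open Matrix in
lemma trace_effect_ge {ι : Type*} [Fintype ι] [DecidableEq ι] (K L U V : Matrix ι ι ℂ)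
    (hK : K.PosSemidef) (hL : L.PosSemidef) (hKL : K + L = 1) (a : ι → ℝ) (ha : ∀ i, 0 ≤ a i)
    (hV : V * Vᴴ = 1) :
    ∑ i, ∑ j, ‖(Uᴴ * K * V) i j‖ ^ 2 * a i ≤
      (K * (U * diagonal (fun i => (a i : ℂ)) * Uᴴ)).trace.re := by
  have h1 : 0 ≤ ((K - K * K) * (U * diagonal (fun i => (a i : ℂ)) * Uᴴ)).trace.re := by
    rw [trace_mul_spec, Complex.re_sum]
    refine Finset.sum_nonneg fun i _ => ?_
    have := ((effect_sq K L hK hL hKL).conjTranspose_mul_mul_same U).diag_nonneg (i := i)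
    have := (Complex.le_def.mp this).1
    rw [Complex.re_mul_ofReal]
    exact mul_nonneg (by simpa using this) (ha i)
  have h2 : ((K * K) * (U * diagonal (fun i => (a i : ℂ)) * Uᴴ)).trace.re =
      ∑ i, ∑ j, ‖(Uᴴ * K * V) i j‖ ^ 2 * a i := by
    rw [trace_mul_spec, Complex.re_sum]
    refine Finset.sum_congr rfl fun i _ => ?_
    rw [diag_sq K U V hK.1.eq hV, Complex.re_mul_ofReal, Complex.ofReal_re, Finset.sum_mul]
  rw [Matrix.sub_mul, Matrix.trace_sub, Complex.sub_re] at h1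
  linarith

open Matrix in
lemma nussbaum_szkola {ι : Type*} [Fintype ι] [DecidableEq ι] (L U V : Matrix ι ι ℂ)
    (hL : L.PosSemidef) (hK : (1 - L).PosSemidef) (a b : ι → ℝ) (ha : ∀ i, 0 ≤ a i)
    (hb : ∀ i, 0 ≤ b i) (hU : U * Uᴴ = 1) (hV : V * Vᴴ = 1) (γ : ℝ) (hγ : 0 ≤ γ) :
    1 / 2 * ∑ i, ∑ j, min (‖(Uᴴ * V) i j‖ ^ 2 * a i) (γ * (‖(Uᴴ * V) i j‖ ^ 2 * b j)) ≤
      ((1 - L) * (U * diagonal (fun i => (a i : ℂ)) * Uᴴ)).trace.re +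
      γ * (L * (V * diagonal (fun i => (b i : ℂ)) * Vᴴ)).trace.re := by
  have h1 := trace_effect_ge (1 - L) L U V hK hL (by abel) a ha hV
  have h2 := trace_effect_ge L (1 - L) V U hL hK (by abel) b hb hU
  have h2' : ∑ i, ∑ j, ‖(Uᴴ * L * V) i j‖ ^ 2 * b j ≤
      (L * (V * diagonal (fun i => (b i : ℂ)) * Vᴴ)).trace.re := by
    refine le_trans (le_of_eq ?_) h2
    rw [Finset.sum_comm]
    refine Finset.sum_congr rfl fun j _ => Finset.sum_congr rfl fun i _ => ?_
    have : Vᴴ * L * U = (Uᴴ * L * V)ᴴ := by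
      rw [conjTranspose_mul, conjTranspose_mul, conjTranspose_conjTranspose, hL.1.eq,
        Matrix.mul_assoc]
    rw [this, conjTranspose_apply, norm_star]
  refine le_trans ?_ (add_le_add h1 (mul_le_mul_of_nonneg_left h2' hγ))
  simp only [Finset.mul_sum, ← Finset.sum_add_distrib]
  refine Finset.sum_le_sum fun i _ => Finset.sum_le_sum fun j _ => ?_
  have hsum : (Uᴴ * V) i j = (Uᴴ * (1 - L) * V) i j + (Uᴴ * L * V) i j := by
    rw [← Matrix.add_apply, ← Matrix.add_mul, ← Matrix.mul_add, sub_add_cancel, Matrix.mul_one]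
  rw [hsum]
  set k := (Uᴴ * (1 - L) * V) i j
  set l := (Uᴴ * L * V) i j
  have hn : ‖k + l‖ ^ 2 ≤ 2 * ‖k‖ ^ 2 + 2 * ‖l‖ ^ 2 := by
    have h := norm_add_le k l
    have h0 := norm_nonneg (k + l)
    nlinarith [sq_nonneg (‖k‖ - ‖l‖)]
  have hmin : min (‖k + l‖ ^ 2 * a i) (γ * (‖k + l‖ ^ 2 * b j)) =
      ‖k + l‖ ^ 2 * min (a i) (γ * b j) := by
    rw [mul_min_of_nonneg _ _ (by positivity)]; congr 1; ring
  rw [hmin]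
  have m1 := min_le_left (a i) (γ * b j)
  have m2 := min_le_right (a i) (γ * b j)
  have m0 : 0 ≤ min (a i) (γ * b j) := le_min (ha i) (mul_nonneg hγ (hb j))
  have e1 : ‖k‖ ^ 2 * min (a i) (γ * b j) ≤ ‖k‖ ^ 2 * a i :=
    mul_le_mul_of_nonneg_left m1 (by positivity)
  have e2 : ‖l‖ ^ 2 * min (a i) (γ * b j) ≤ ‖l‖ ^ 2 * (γ * b j) :=
    mul_le_mul_of_nonneg_left m2 (by positivity)
  have e3 := mul_le_mul_of_nonneg_right hn m0
  nlinarith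

/-- tensor product of a family of matrices -/
def tens {d n : ℕ} (f : Fin n → Matrix (Fin d) (Fin d) ℂ) :
    Matrix (Fin n → Fin d) (Fin n → Fin d) ℂ :=
  Matrix.of fun i j => ∏ k, f k (i k) (j k)

lemma tens_apply {d n : ℕ} (f : Fin n → Matrix (Fin d) (Fin d) ℂ) (i j) :
    tens f i j = ∏ k, f k (i k) (j k) := rfl

lemma sum_pi_prod' {Z : Type*} [Fintype Z] {n : ℕ} (f : Fin n → Z → ℂ) :
    ∑ z : Fin n → Z, ∏ k, f k (z k) = ∏ k, ∑ y, f k y := by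
  classical
  rw [Finset.prod_univ_sum, Fintype.piFinset_univ]

lemma tens_mul {d n : ℕ} (f g : Fin n → Matrix (Fin d) (Fin d) ℂ) :
    tens f * tens g = tens (fun k => f k * g k) := by
  ext i j
  simp only [Matrix.mul_apply, tens_apply, ← Finset.prod_mul_distrib]
  exact sum_pi_prod' (fun k y => f k (i k) y * g k y (j k))

open Matrix in
lemma tens_conjTranspose {d n : ℕ} (f : Fin n → Matrix (Fin d) (Fin d) ℂ) :
    (tens f)ᴴ = tens (fun k => (f k)ᴴ) := by
  ext i j
  simp [tens_apply, conjTranspose_apply]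

lemma tens_diagonal {d n : ℕ} (a : Fin n → Fin d → ℂ) :
    tens (fun k => Matrix.diagonal (a k)) = Matrix.diagonal (fun i => ∏ k, a k (i k)) := by
  ext i j
  rw [tens_apply]
  by_cases h : i = j
  · subst h; simp
  · rw [Matrix.diagonal_apply_ne _ h]
    obtain ⟨k, hk⟩ := Function.ne_iff.mp h
    exact Finset.prod_eq_zero (Finset.mem_univ k) (Matrix.diagonal_apply_ne _ hk)

lemma tens_one {d n : ℕ} : tens (fun _ : Fin n => (1 : Matrix (Fin d) (Fin d) ℂ)) = 1 := by
  rw [← Matrix.diagonal_one, tens_diagonal]; simp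

lemma tens_trace {d n : ℕ} (f : Fin n → Matrix (Fin d) (Fin d) ℂ) :
    (tens f).trace = ∏ k, (f k).trace :=
  sum_pi_prod' (fun k y => f k y y)

open Matrix in
/-- Hypothesis testing bound for tensor product states in terms of the classical pair. -/
lemma ns_tensor {d n : ℕ} (L : Matrix (Fin n → Fin d) (Fin n → Fin d) ℂ)
    (hL : L.PosSemidef) (hK : (1 - L).PosSemidef)
    (U V : Fin n → Matrix (Fin d) (Fin d) ℂ) (hU : ∀ k, U k * (U k)ᴴ = 1)
    (hV : ∀ k, V k * (V k)ᴴ = 1) (a b : Fin n → Fin d → ℝ) (ha : ∀ k i, 0 ≤ a k i)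
    (hb : ∀ k i, 0 ≤ b k i) (γ : ℝ) (hγ : 0 ≤ γ) :
    1 / 2 * ∑ z : Fin n → Fin d × Fin d,
      min (∏ k, ‖((U k)ᴴ * V k) (z k).1 (z k).2‖ ^ 2 * a k (z k).1)
        (γ * ∏ k, ‖((U k)ᴴ * V k) (z k).1 (z k).2‖ ^ 2 * b k (z k).2) ≤
      ((1 - L) * tens (fun k => U k * diagonal (fun i => (a k i : ℂ)) * (U k)ᴴ)).trace.re +
      γ * (L * tens (fun k => V k * diagonal (fun i => (b k i : ℂ)) * (V k)ᴴ)).trace.re := by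
  have h := nussbaum_szkola L (tens U) (tens V) hL hK (fun i => ∏ k, a k (i k))
    (fun i => ∏ k, b k (i k)) (fun i => Finset.prod_nonneg fun k _ => ha _ _)
    (fun i => Finset.prod_nonneg fun k _ => hb _ _)
    (by rw [tens_conjTranspose, tens_mul]; simp only [hU]; exact tens_one)
    (by rw [tens_conjTranspose, tens_mul]; simp only [hV]; exact tens_one) γ hγ
  have e : ∀ (W : Fin n → Matrix (Fin d) (Fin d) ℂ) (c : Fin n → Fin d → ℝ),
      tens W * diagonal (fun i => ((∏ k, c k (i k) : ℝ) : ℂ)) * (tens W)ᴴ =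
      tens (fun k => W k * diagonal (fun i => (c k i : ℂ)) * (W k)ᴴ) := by
    intro W c
    rw [← tens_mul, ← tens_mul, tens_conjTranspose, tens_diagonal]
    simp
  rw [e, e] at h
  refine le_trans (le_of_eq ?_) h
  congr 1
  rw [← Fintype.sum_prod_type']
  refine Fintype.sum_equiv (Equiv.arrowProdEquivProdArrow (Fin n) (fun _ => Fin d) (fun _ => Fin d)) _ _ ?_
  intro z
  simp only [Equiv.arrowProdEquivProdArrow, Equiv.coe_fn_mk, tens_conjTranspose, tens_mul,
    tens_apply, norm_prod, Finset.prod_mul_distrib, Finset.prod_pow]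


section spec
variable {d : ℕ}
open Matrix

/-- overlap of eigenbases -/
def ov {A B : Matrix (Fin d) (Fin d) ℂ} (hA : A.IsHermitian) (hB : B.IsHermitian)
    (i j : Fin d) : ℝ :=
  ‖(((hA.eigenvectorUnitary : Matrix (Fin d) (Fin d) ℂ))ᴴ *
    (hB.eigenvectorUnitary : Matrix (Fin d) (Fin d) ℂ)) i j‖ ^ 2

def nsp {A B : Matrix (Fin d) (Fin d) ℂ} (hA : A.IsHermitian) (hB : B.IsHermitian)
    (z : Fin d × Fin d) : ℝ := ov hA hB z.1 z.2 * hA.eigenvalues z.1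

def nsq {A B : Matrix (Fin d) (Fin d) ℂ} (hA : A.IsHermitian) (hB : B.IsHermitian)
    (z : Fin d × Fin d) : ℝ := ov hA hB z.1 z.2 * hB.eigenvalues z.2

lemma unit_mul_conj {A : Matrix (Fin d) (Fin d) ℂ} (hA : A.IsHermitian) :
    (hA.eigenvectorUnitary : Matrix (Fin d) (Fin d) ℂ) *
      (hA.eigenvectorUnitary : Matrix (Fin d) (Fin d) ℂ)ᴴ = 1 :=
  Unitary.mul_star_self_of_mem hA.eigenvectorUnitary.2

lemma unit_conj_mul {A : Matrix (Fin d) (Fin d) ℂ} (hA : A.IsHermitian) :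
    (hA.eigenvectorUnitary : Matrix (Fin d) (Fin d) ℂ)ᴴ *
      (hA.eigenvectorUnitary : Matrix (Fin d) (Fin d) ℂ) = 1 :=
  Unitary.star_mul_self_of_mem hA.eigenvectorUnitary.2

lemma spec_eq {A : Matrix (Fin d) (Fin d) ℂ} (hA : A.IsHermitian) :
    A = (hA.eigenvectorUnitary : Matrix (Fin d) (Fin d) ℂ) *
      diagonal (fun i => (hA.eigenvalues i : ℂ)) *
      (hA.eigenvectorUnitary : Matrix (Fin d) (Fin d) ℂ)ᴴ := by
  conv_lhs => rw [hA.spectral_theorem]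
  rfl

lemma ov_nonneg {A B : Matrix (Fin d) (Fin d) ℂ} (hA : A.IsHermitian) (hB : B.IsHermitian)
    (i j : Fin d) : 0 ≤ ov hA hB i j := by unfold ov; positivity

lemma ov_sum {A B : Matrix (Fin d) (Fin d) ℂ} (hA : A.IsHermitian) (hB : B.IsHermitian)
    (i : Fin d) : ∑ j, ov hA hB i j = 1 := by
  have h := diag_sq 1 (hA.eigenvectorUnitary : Matrix (Fin d) (Fin d) ℂ)
    (hB.eigenvectorUnitary : Matrix (Fin d) (Fin d) ℂ) (by simp) (unit_mul_conj hB) i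
  rw [Matrix.mul_one, Matrix.mul_one, unit_conj_mul, Matrix.one_apply_eq] at h
  exact_mod_cast h.symm

lemma good_ns {A B : Matrix (Fin d) (Fin d) ℂ} (hA : IsDensity A) (hB : B.PosDef) :
    Good (nsp hA.1.1 hB.1) (nsq hA.1.1 hB.1) where
  hp0 z := mul_nonneg (ov_nonneg _ _ _ _) (hA.1.eigenvalues_nonneg _)
  hq0 z := mul_nonneg (ov_nonneg _ _ _ _) (hB.eigenvalues_pos _).le
  hpq z hz := by
    refine mul_pos (lt_of_le_of_ne (ov_nonneg _ _ _ _) fun h => ?_) (hB.eigenvalues_pos _)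
    unfold nsp at hz
    rw [← h, zero_mul] at hz
    exact lt_irrefl _ hz
  hp1 := by
    rw [Fintype.sum_prod_type]
    simp only [nsp, ← Finset.sum_mul, ov_sum, one_mul]
    have h : (1 : ℂ) = ∑ i, ((hA.1.1.eigenvalues i : ℝ) : ℂ) :=
      hA.2.symm.trans hA.1.1.trace_eq_sum_eigenvalues
    exact_mod_cast h.symm

lemma trace_spec {A B : Matrix (Fin d) (Fin d) ℂ} (hA : A.IsHermitian) (hB : B.IsHermitian)
    (a b : Fin d → ℝ) :
    (((hA.eigenvectorUnitary : Matrix (Fin d) (Fin d) ℂ) *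
      diagonal (fun i => (a i : ℂ)) * (hA.eigenvectorUnitary : Matrix (Fin d) (Fin d) ℂ)ᴴ) *
     ((hB.eigenvectorUnitary : Matrix (Fin d) (Fin d) ℂ) *
      diagonal (fun i => (b i : ℂ)) * (hB.eigenvectorUnitary : Matrix (Fin d) (Fin d) ℂ)ᴴ)).trace.re
    = ∑ i, ∑ j, ov hA hB i j * a i * b j := by
  set U := (hA.eigenvectorUnitary : Matrix (Fin d) (Fin d) ℂ) with hU
  set V := (hB.eigenvectorUnitary : Matrix (Fin d) (Fin d) ℂ) with hV
  rw [trace_mul_spec, Complex.re_sum, Finset.sum_comm]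
  refine Finset.sum_congr rfl fun j _ => ?_
  rw [Complex.re_mul_ofReal, ← Finset.sum_mul]
  congr 1
  have : Vᴴ * (U * diagonal (fun i => (a i : ℂ)) * Uᴴ) * V =
      (Uᴴ * V)ᴴ * diagonal (fun i => (a i : ℂ)) * (Uᴴ * V) := by
    rw [conjTranspose_mul, conjTranspose_conjTranspose]
    simp only [Matrix.mul_assoc]
  rw [this, Matrix.mul_apply, Complex.re_sum]
  refine Finset.sum_congr rfl fun i _ => ?_
  rw [Matrix.mul_diagonal, conjTranspose_apply]
  have h2 : star ((Uᴴ * V) i j) * (a i : ℂ) * (Uᴴ * V) i j = ((ov hA hB i j * a i : ℝ) : ℂ) := by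
    rw [mul_right_comm, Complex.star_def, mul_comm (starRingEnd ℂ _), Complex.mul_conj,
      Complex.normSq_eq_norm_sq]
    unfold ov
    push_cast
    rfl
  rw [h2, Complex.ofReal_re]

lemma mpow_eq {A : Matrix (Fin d) (Fin d) ℂ} (hA : A.IsHermitian) (r : ℝ) :
    mpow A r = (hA.eigenvectorUnitary : Matrix (Fin d) (Fin d) ℂ) *
      diagonal (fun i => ((if hA.eigenvalues i = 0 then (0 : ℝ)
        else hA.eigenvalues i ^ r : ℝ) : ℂ)) *
      (hA.eigenvectorUnitary : Matrix (Fin d) (Fin d) ℂ)ᴴ := by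
  unfold mpow
  rw [dif_pos hA]
  rfl

lemma trace_mpow {A B : Matrix (Fin d) (Fin d) ℂ} (hA : IsDensity A) (hB : B.PosDef) {ρ : ℝ}
    (hρ : 0 ≤ ρ) : (mpow A (1 / (1 + ρ)) * mpow B (ρ / (1 + ρ))).trace.re =
      tA (nsp hA.1.1 hB.1) (nsq hA.1.1 hB.1) ρ := by
  rw [mpow_eq hA.1.1, mpow_eq hB.1, trace_spec]
  unfold tA
  rw [Fintype.sum_prod_type]
  refine Finset.sum_congr rfl fun i _ => Finset.sum_congr rfl fun j _ => ?_
  have hμ := hB.eigenvalues_pos j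
  have hl := hA.1.eigenvalues_nonneg i
  have ho := ov_nonneg hA.1.1 hB.1 i j
  rw [if_neg hμ.ne']
  unfold tw nsp nsq
  simp only
  have hs : 1 / (1 + ρ) ≠ 0 := by positivity
  have h1 : (if hA.1.1.eigenvalues i = 0 then 0 else hA.1.1.eigenvalues i ^ (1 / (1 + ρ))) =
      hA.1.1.eigenvalues i ^ (1 / (1 + ρ)) := by
    split_ifs with h
    · rw [h, Real.zero_rpow hs]
    · rfl
  rw [h1, Real.mul_rpow ho hl, Real.mul_rpow ho hμ.le]
  have h2 : ov hA.1.1 hB.1 i j =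
      ov hA.1.1 hB.1 i j ^ (1 / (1 + ρ)) * ov hA.1.1 hB.1 i j ^ (ρ / (1 + ρ)) := by
    rcases ho.eq_or_lt with h | h
    · rw [← h, Real.zero_rpow hs]; simp
    · rw [← Real.rpow_add h, ← add_div, div_self (by positivity), Real.rpow_one]
  conv_lhs => rw [h2]
  ring

open scoped MatrixOrder Matrix.Norms.L2Operator in
lemma cfc_eq_spec {A : Matrix (Fin d) (Fin d) ℂ} (hA : A.IsHermitian) (f : ℝ → ℝ) :
    cfc f A = (hA.eigenvectorUnitary : Matrix (Fin d) (Fin d) ℂ) *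
      diagonal (fun i => ((f (hA.eigenvalues i) : ℝ) : ℂ)) *
      (hA.eigenvectorUnitary : Matrix (Fin d) (Fin d) ℂ)ᴴ := by
  rw [hA.cfc_eq]
  rfl

open scoped MatrixOrder Matrix.Norms.L2Operator in
lemma rpow_eq_cfc {A : Matrix (Fin d) (Fin d) ℂ} (hA : A.PosSemidef) (r : ℝ) :
    A ^ r = cfc (fun x : ℝ => x ^ r) A :=
  CFC.rpow_eq_cfc_real hA.nonneg

open scoped MatrixOrder Matrix.Norms.L2Operator in
lemma mpow_eq_rpow {A : Matrix (Fin d) (Fin d) ℂ} (hA : A.PosDef) (r : ℝ) :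
    mpow A r = A ^ r := by
  rw [rpow_eq_cfc hA.posSemidef, cfc_eq_spec hA.1, mpow_eq hA.1]
  congr; funext i; rw [if_neg (hA.eigenvalues_pos i).ne']

lemma spec_nonneg {A : Matrix (Fin d) (Fin d) ℂ} (hA : A.IsHermitian) (a : Fin d → ℝ)
    (ha : ∀ i, 0 ≤ a i) : ((hA.eigenvectorUnitary : Matrix (Fin d) (Fin d) ℂ) *
      diagonal (fun i => (a i : ℂ)) *
      (hA.eigenvectorUnitary : Matrix (Fin d) (Fin d) ℂ)ᴴ).PosSemidef :=
  (PosSemidef.diagonal (fun i => by simpa using ha i)).mul_mul_conjTranspose_same _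

open scoped MatrixOrder Matrix.Norms.L2Operator in
lemma mpow_le_rpow {A : Matrix (Fin d) (Fin d) ℂ} (hA : A.PosSemidef) (r : ℝ) :
    mpow A r ≤ A ^ r := by
  rw [rpow_eq_cfc hA, cfc_eq_spec hA.1, mpow_eq hA.1, Matrix.le_iff, ← Matrix.sub_mul,
    ← Matrix.mul_sub, Matrix.diagonal_sub]
  simp only [← Complex.ofReal_sub]
  refine spec_nonneg hA.1 _ fun i => ?_
  have := Real.rpow_nonneg (hA.eigenvalues_nonneg i) r
  split_ifs <;> simp [this]

lemma mpow_psd {A : Matrix (Fin d) (Fin d) ℂ} (hA : A.PosSemidef) (r : ℝ) :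
    (mpow A r).PosSemidef := by
  rw [mpow_eq hA.1]
  refine spec_nonneg hA.1 _ fun i => ?_
  have := Real.rpow_nonneg (hA.eigenvalues_nonneg i) r
  split_ifs <;> simp [this]

lemma trace_mul_psd {A B : Matrix (Fin d) (Fin d) ℂ} (hA : A.PosSemidef) (hB : B.PosSemidef) :
    0 ≤ (A * B).trace.re := by
  conv_rhs => rw [spec_eq hA.1, spec_eq hB.1]
  rw [trace_spec]
  exact Finset.sum_nonneg fun i _ => Finset.sum_nonneg fun j _ => mul_nonneg
    (mul_nonneg (ov_nonneg _ _ _ _) (hA.eigenvalues_nonneg _)) (hB.eigenvalues_nonneg _)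

open scoped MatrixOrder in
lemma trace_mul_mono {A B C : Matrix (Fin d) (Fin d) ℂ} (hA : A.PosSemidef) (h : B ≤ C) :
    (A * B).trace.re ≤ (A * C).trace.re := by
  have := trace_mul_psd hA (Matrix.le_iff.mp h)
  rw [Matrix.mul_sub, Matrix.trace_sub, Complex.sub_re] at this
  linarith

end spec


section minimax
open Set

lemma sion_le {E F : Type*} [TopologicalSpace E] [AddCommGroup E] [Module ℝ E]
    [IsTopologicalAddGroup E] [ContinuousSMul ℝ E]
    [TopologicalSpace F] [AddCommGroup F] [Module ℝ F]
    [IsTopologicalAddGroup F] [ContinuousSMul ℝ F]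
    {X : Set E} {Y : Set F} {f : E → F → ℝ}
    (ne_X : X.Nonempty) (kX : IsCompact X) (cX : Convex ℝ X) (cY : Convex ℝ Y)
    (hfy : ∀ y ∈ Y, ContinuousOn (fun x => f x y) X)
    (hfy' : ∀ y ∈ Y, ConvexOn ℝ X (fun x => f x y))
    (hfx : ∀ x ∈ X, ContinuousOn (fun y => f x y) Y)
    (hfx' : ∀ x ∈ X, ConcaveOn ℝ Y (fun y => f x y))
    {t : ℝ} (h : ∀ y ∈ Y, ∃ x ∈ X, f x y ≤ t) : ∃ x ∈ X, ∀ y ∈ Y, f x y ≤ t := by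
  by_contra hc
  push Not at hc
  have hl : ∀ y ∈ Y, LowerSemicontinuousOn (fun x => f x y) X :=
    fun y hy => (hfy y hy).lowerSemicontinuousOn
  have : ∃ s : Finset Y, ∀ x ∈ X, ∃ i ∈ s, t < f x i := by
    rw [← LowerSemicontinuousOn.inter_biInter_preimage_Iic_eq_empty_iff_exists_finset kX hl]
    apply Set.eq_empty_of_forall_notMem
    rintro x ⟨hx, hx'⟩
    simp only [mem_iInter, mem_preimage, mem_Iic] at hx'
    obtain ⟨y, hy, hy'⟩ := hc x hx
    exact absurd (hx' y hy) (not_le.mpr hy')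
  obtain ⟨s, hs⟩ := this
  have hs' (x) (hx : x ∈ X) : ∃ y ∈ Subtype.val '' (s : Set Y), t < f x y := by
    obtain ⟨i, hi, hi'⟩ := hs x hx
    exact ⟨i.val, by simp [hi], hi'⟩
  obtain ⟨y0, hy0, h0⟩ := Sion.exists_lt_iInf_of_lt_iInf_of_finite
        ne_X kX hl (fun y hy => (hfy' y hy).quasiconvexOn) cY
        (fun x hx => (hfx x hx).upperSemicontinuousOn)
        (fun x hx => (hfx' x hx).quasiconcaveOn) cX
        (t := t)
        (toFinite _) (Subtype.coe_image_subset Y ↑s) hs'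
  obtain ⟨x, hx, hx'⟩ := h y0 hy0
  exact absurd hx' (not_le.mpr (h0 x hx))

end minimax


section Kset
open Matrix
variable {d : ℕ}

def Kset (d : ℕ) (κ : ℝ) : Set (Matrix (Fin d) (Fin d) ℂ) :=
  {F | F.trace = 1 ∧ (F - (κ : ℂ) • (1 : Matrix (Fin d) (Fin d) ℂ)).PosSemidef}

lemma Kset_posDef {κ : ℝ} (hκ : 0 < κ) {F : Matrix (Fin d) (Fin d) ℂ} (hF : F ∈ Kset d κ) :
    F.PosDef := by
  have h1 : ((κ : ℂ) • (1 : Matrix (Fin d) (Fin d) ℂ)).PosDef :=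
    PosDef.one.smul (by exact_mod_cast hκ)
  have := PosDef.posSemidef_add hF.2 h1
  simpa using this

open scoped MatrixOrder Matrix.Norms.L2Operator in
lemma Kset_le {κ : ℝ} {F : Matrix (Fin d) (Fin d) ℂ} :
    F ∈ Kset d κ ↔ F.trace = 1 ∧ (κ : ℂ) • (1 : Matrix (Fin d) (Fin d) ℂ) ≤ F := by
  rw [Matrix.le_iff]; rfl

lemma Kset_convex (κ : ℝ) : Convex ℝ (Kset d κ) := by
  intro A hA B hB a b ha hb hab
  have hab' : (a : ℂ) + (b : ℂ) = 1 := by exact_mod_cast hab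
  refine ⟨?_, ?_⟩
  · rw [trace_add, trace_smul, trace_smul, hA.1, hB.1]
    simpa using hab'
  · have h := (hA.2.smul (show (0 : ℂ) ≤ (a : ℂ) by exact_mod_cast ha)).add
      (hB.2.smul (show (0 : ℂ) ≤ (b : ℂ) by exact_mod_cast hb))
    convert h using 1
    have : (κ : ℂ) = (a : ℂ) * κ + (b : ℂ) * κ := by rw [← add_mul, hab', one_mul]
    rw [smul_sub, smul_sub, smul_smul, smul_smul]
    conv_lhs => rw [this, add_smul]
    have e1 : a • A = (a : ℂ) • A := by ext; simp
    have e2 : b • B = (b : ℂ) • B := by ext; simp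
    rw [e1, e2]
    abel

lemma dens_le_one {F : Matrix (Fin d) (Fin d) ℂ} (hF : IsDensity F) : (1 - F).PosSemidef := by
  have h : (1 : ℂ) = ∑ i, ((hF.1.1.eigenvalues i : ℝ) : ℂ) :=
      hF.2.symm.trans hF.1.1.trace_eq_sum_eigenvalues
  have h' : ∑ i, hF.1.1.eigenvalues i = 1 := by exact_mod_cast h.symm
  have h2 := spec_nonneg hF.1.1 (fun i => 1 - hF.1.1.eigenvalues i) (fun i => by
    have := Finset.single_le_sum (f := hF.1.1.eigenvalues)
      (fun j _ => hF.1.eigenvalues_nonneg j) (Finset.mem_univ i)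
    linarith)
  convert h2 using 1
  have e : (diagonal (fun i => ((1 - hF.1.1.eigenvalues i : ℝ) : ℂ)) : Matrix (Fin d) (Fin d) ℂ) =
      1 - diagonal (fun i => (hF.1.1.eigenvalues i : ℂ)) := by
    rw [← diagonal_one, diagonal_sub]
    simp
  rw [e, Matrix.mul_sub, Matrix.sub_mul, Matrix.mul_one, unit_mul_conj, ← spec_eq]

open scoped MatrixOrder Matrix.Norms.L2Operator in
lemma Kset_compact {κ : ℝ} (hκ : 0 < κ) : IsCompact (Kset d κ) := by
  have : ProperSpace (Matrix (Fin d) (Fin d) ℂ) := FiniteDimensional.proper ℂ _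
  refine Metric.isCompact_of_isClosed_isBounded ?_ ?_
  · have : Kset d κ = {F | F.trace = 1} ∩ Set.Ici ((κ : ℂ) • (1 : Matrix (Fin d) (Fin d) ℂ)) := by
      ext F; rw [Kset_le]; rfl
    rw [this]
    refine IsClosed.inter (isClosed_eq ?_ continuous_const) isClosed_Ici
    exact continuous_id.matrix_trace
  · refine isBounded_iff_forall_norm_le.mpr ⟨1, fun F hF => ?_⟩
    have hp := (Kset_posDef hκ hF).posSemidef
    refine (CStarAlgebra.norm_le_one_iff_of_nonneg F hp.nonneg).mpr ?_
    rw [Matrix.le_iff]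
    exact dens_le_one ⟨hp, hF.1⟩

lemma rho_mem {ρ : ℝ} (hρ : 0 ≤ ρ) : ρ / (1 + ρ) ∈ Set.Icc (0 : ℝ) 1 :=
  ⟨by positivity, by rw [div_le_one (by positivity)]; linarith⟩

open scoped MatrixOrder Matrix.Norms.L2Operator in
lemma T_concave {A : Matrix (Fin d) (Fin d) ℂ} (hA : A.PosSemidef) {p : ℝ}
    (hp : p ∈ Set.Icc (0 : ℝ) 1) : ConcaveOn ℝ (Set.Ici (0 : Matrix (Fin d) (Fin d) ℂ))
      (fun F => (A * F ^ p).trace.re) := by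
  refine ⟨(CFC.concaveOn_rpow hp).1, fun F hF G hG a b ha hb hab => ?_⟩
  have h := trace_mul_mono hA ((CFC.concaveOn_rpow hp).2 hF hG ha hb hab)
  refine le_trans (le_of_eq ?_) h
  rw [Matrix.mul_add, trace_add, Matrix.mul_smul, Matrix.mul_smul, trace_smul, trace_smul]
  simp

open scoped MatrixOrder Matrix.Norms.L2Operator in
lemma T_concave_K {A : Matrix (Fin d) (Fin d) ℂ} (hA : A.PosSemidef) {p κ : ℝ} (hκ : 0 < κ)
    (hp : p ∈ Set.Icc (0 : ℝ) 1) : ConcaveOn ℝ (Kset d κ)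
      (fun F => (A * mpow F p).trace.re) := by
  refine ConcaveOn.congr ((T_concave hA hp).subset
    (fun F hF => (Kset_posDef hκ hF).posSemidef.nonneg) (Kset_convex κ)) fun F hF => ?_
  rw [mpow_eq_rpow (Kset_posDef hκ hF)]

open scoped MatrixOrder Matrix.Norms.L2Operator in
lemma T_cont_K {A : Matrix (Fin d) (Fin d) ℂ} {p κ : ℝ} (hκ : 0 < κ) :
    ContinuousOn (fun F => (A * mpow F p).trace.re) (Kset d κ) := by
  have h : ContinuousOn (fun F : Matrix (Fin d) (Fin d) ℂ => F ^ p) (Kset d κ) :=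
    (CFC.continuousOn_rpow p).mono fun F hF =>
      Matrix.isStrictlyPositive_iff_posDef.mpr (Kset_posDef hκ hF)
  have h3 : Continuous (fun B : Matrix (Fin d) (Fin d) ℂ => (A * B).trace.re) :=
    Complex.continuous_re.comp (continuous_const.matrix_mul continuous_id).matrix_trace
  refine (h3.comp_continuousOn h).congr fun F hF => ?_
  simp only [Function.comp]
  rw [mpow_eq_rpow (Kset_posDef hκ hF)]

open scoped MatrixOrder Matrix.Norms.L2Operator in
lemma T_perturb {F : Matrix (Fin d) (Fin d) ℂ} (hF : IsDensity F)
    {p η : ℝ} (hη : 0 < η) (hη1 : η < 1) (hp : p ∈ Set.Icc (0 : ℝ) 1) :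
    ∃ F' ∈ Kset d (η / d), ∀ A : Matrix (Fin d) (Fin d) ℂ, A.PosSemidef →
      (1 - η) * (A * mpow F p).trace.re ≤ (A * mpow F' p).trace.re := by
  have hd : 0 < d := by
    rcases Nat.eq_zero_or_pos d with h | h
    · subst h
      have := hF.2
      simp [Matrix.trace] at this
    · exact h
  have hd' : (0 : ℝ) < d := by exact_mod_cast hd
  set I : Matrix (Fin d) (Fin d) ℂ := ((1 / d : ℝ) : ℂ) • 1 with hI
  have hI0 : I.PosSemidef := PosSemidef.one.smul
    (show (0 : ℂ) ≤ ((1 / d : ℝ) : ℂ) by exact_mod_cast (by positivity : (0 : ℝ) ≤ 1 / d))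
  have hK : (1 - η) • F + η • I ∈ Kset d (η / d) := by
    refine ⟨?_, ?_⟩
    · rw [trace_add, trace_smul, trace_smul, hF.2, hI, trace_smul, trace_one]
      have : (d : ℂ) ≠ 0 := by exact_mod_cast hd.ne'
      simp [this]
    · have h := hF.1.smul (show (0 : ℂ) ≤ ((1 - η : ℝ) : ℂ) by
        exact_mod_cast (by linarith : (0 : ℝ) ≤ 1 - η))
      convert h using 1
      ext i j
      simp [hI]
      ring
  refine ⟨_, hK, fun A hA => ?_⟩
  rw [mpow_eq_rpow (Kset_posDef (by positivity) hK)]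
  have h := (T_concave hA hp).2 (x := F) (y := I) hF.1.nonneg hI0.nonneg
    (by linarith : 0 ≤ 1 - η) hη.le (by ring)
  simp only [smul_eq_mul] at h
  have h1 := trace_mul_mono hA (mpow_le_rpow hF.1 p)
  have h2 : 0 ≤ (A * I ^ p).trace.re :=
    (trace_mul_psd hA (mpow_psd hI0 p)).trans (trace_mul_mono hA (mpow_le_rpow hI0 p))
  have h3 := mul_le_mul_of_nonneg_left h1 (by linarith : 0 ≤ 1 - η)
  have h4 := mul_nonneg hη.le h2
  linarith

end Kset


section existsF
open Matrix
variable {d : ℕ} {X : Type*} [Fintype X]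

lemma negLog_ne_bot (t : ℝ) : negLog t ≠ ⊥ := by
  unfold negLog
  split_ifs
  · exact top_ne_bot
  · exact EReal.coe_ne_bot _

lemma ereal_coe_sum (s : Finset X) (f : X → ℝ) :
    ∑ x ∈ s, ((f x : ℝ) : EReal) = ((∑ x ∈ s, f x : ℝ) : EReal) := by
  classical
  induction s using Finset.induction_on with
  | empty => simp
  | insert a s ha ih => rw [Finset.sum_insert ha, Finset.sum_insert ha, ih, EReal.coe_add]

lemma sum_ne_bot (s : Finset X) (f : X → EReal) (h : ∀ x ∈ s, f x ≠ ⊥) : ∑ x ∈ s, f x ≠ ⊥ := by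
  classical
  induction s using Finset.induction_on with
  | empty => simp
  | insert a s ha ih =>
    rw [Finset.sum_insert ha]
    exact EReal.add_ne_bot_iff.mpr ⟨h a (Finset.mem_insert_self _ _),
      ih fun x hx => h x (Finset.mem_insert_of_mem hx)⟩

lemma term_ne_bot {p : ℝ} (hp : 0 ≤ p) (t : ℝ) : (p : EReal) * negLog t ≠ ⊥ := by
  unfold negLog
  split_ifs
  · rcases hp.eq_or_lt with h | h
    · rw [← h]; simp
    · rw [EReal.coe_mul_top_of_pos h]; exact top_ne_bot
  · rw [← EReal.coe_mul]; exact EReal.coe_ne_bot _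

lemma sum_negLog (P T : X → ℝ) (hP : ∀ x, 0 ≤ P x) (b : ℝ) (c : ℝ) (hc : 0 < c)
    (h : (c : EReal) * ∑ x, (P x : EReal) * negLog (T x) < (b : EReal)) :
    (∀ x, 0 < P x → 0 < T x) ∧ c * ∑ x, P x * (-Real.log (T x)) < b := by
  classical
  have h1 : ∀ x, 0 < P x → 0 < T x := by
    intro x hx
    by_contra hT
    have e : ∑ x, (P x : EReal) * negLog (T x) = ⊤ := by
      rw [← Finset.add_sum_erase _ _ (Finset.mem_univ x)]
      unfold negLog
      rw [if_pos (not_lt.mp hT), EReal.coe_mul_top_of_pos hx]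
      exact EReal.top_add_of_ne_bot (sum_ne_bot _ _ fun y _ => term_ne_bot (hP y) (T y))
    rw [e, EReal.coe_mul_top_of_pos hc] at h
    exact absurd h (not_lt.mpr le_top)
  refine ⟨h1, ?_⟩
  have e : ∑ x, (P x : EReal) * negLog (T x) = ((∑ x, P x * (-Real.log (T x)) : ℝ) : EReal) := by
    rw [← ereal_coe_sum]
    refine Finset.sum_congr rfl fun x _ => ?_
    rcases (hP x).eq_or_lt with h0 | h0
    · rw [← h0]; simp
    · unfold negLog
      rw [if_neg (not_le.mpr (h1 x h0)), EReal.coe_mul]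
  rw [e, ← EReal.coe_mul] at h
  exact_mod_cast h

lemma lin_comb (P u v : X → ℝ) (a b k : ℝ) (hab : a + b = 1) :
    ∑ x, P x * (a * u x + b * v x) - k = a * (∑ x, P x * u x - k) + b * (∑ x, P x * v x - k) := by
  have : ∑ x, P x * (a * u x + b * v x) = a * ∑ x, P x * u x + b * ∑ x, P x * v x := by
    rw [Finset.mul_sum, Finset.mul_sum, ← Finset.sum_add_distrib]
    exact Finset.sum_congr rfl fun x _ => by ring
  rw [this]
  have h2 : k = a * k + b * k := by rw [← add_mul, hab, one_mul]
  linarith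

def gfun (S : X → Matrix (Fin d) (Fin d) ℂ) (P : X → ℝ) (r : ℝ)
    (F : Matrix (Fin d) (Fin d) ℂ) (ρ : ℝ) : ℝ :=
  ∑ x, P x * (-((1 + ρ) * Real.log (mpow (S x) (1 / (1 + ρ)) * mpow F (ρ / (1 + ρ))).trace.re))
    - ρ * r

lemma T_pos {A : Matrix (Fin d) (Fin d) ℂ} (hA : IsDensity A) {κ : ℝ} (hκ : 0 < κ)
    {F : Matrix (Fin d) (Fin d) ℂ} (hF : F ∈ Kset d κ) {ρ : ℝ} (hρ : 0 ≤ ρ) :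
    0 < (mpow A (1 / (1 + ρ)) * mpow F (ρ / (1 + ρ))).trace.re := by
  rw [trace_mpow hA (Kset_posDef hκ hF) hρ]
  exact (good_ns hA (Kset_posDef hκ hF)).tA_pos ρ

lemma exists_F (S : X → Matrix (Fin d) (Fin d) ℂ) (hS : ∀ x, IsDensity (S x))
    (P : X → ℝ) (hP : IsProbDist P) (r c t : ℝ) (hc : 0 < c) (h : Espcc S r P < (t : EReal)) :
    ∃ F : Matrix (Fin d) (Fin d) ℂ, F.PosDef ∧ F.trace = 1 ∧
      ∀ ρ, 0 ≤ ρ → gfun S P (r + c) F ρ ≤ t + c := by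
  have hne : Nonempty X := by
    by_contra hX
    rw [not_nonempty_iff] at hX
    have := hP.2
    simp at this
  obtain ⟨x0⟩ := hne
  have hd : 0 < d := by
    rcases Nat.eq_zero_or_pos d with h | h
    · subst h
      have := (hS x0).2
      simp [Matrix.trace] at this
    · exact h
  have hd' : (0 : ℝ) < d := by exact_mod_cast hd
  set η := 1 - Real.exp (-c) with hηd
  have hη1 : η < 1 := by have := Real.exp_pos (-c); linarith
  have hη : 0 < η := by
    have : Real.exp (-c) < 1 := Real.exp_lt_one_iff.mpr (by linarith)
    linarith
  have hκ : 0 < η / d := by positivity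
  have key : ∃ F ∈ Kset d (η / d), ∀ ρ ∈ Set.Ici (0 : ℝ), gfun S P (r + c) F ρ ≤ t + c := by
    refine sion_le ?_ (Kset_compact hκ) (Kset_convex _) (convex_Ici 0) ?_ ?_ ?_ ?_ ?_
    · obtain ⟨F', hF', -⟩ := T_perturb (hS x0) hη hη1 (rho_mem le_rfl)
      exact ⟨F', hF'⟩
    · intro ρ hρ
      unfold gfun
      refine ContinuousOn.sub (continuousOn_finsetSum _ fun x _ => ?_) continuousOn_const
      refine continuousOn_const.mul (ContinuousOn.neg (continuousOn_const.mul ?_))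
      exact ContinuousOn.log (T_cont_K hκ) fun F hF => (T_pos (hS x) hκ hF hρ).ne'
    · intro ρ hρ
      have hρ' : (0 : ℝ) ≤ ρ := hρ
      refine ⟨Kset_convex _, fun F hF G hG a b ha hb hab => ?_⟩
      unfold gfun
      have hx : ∀ x, -((1 + ρ) * Real.log (mpow (S x) (1 / (1 + ρ)) *
          mpow (a • F + b • G) (ρ / (1 + ρ))).trace.re) ≤
          a * (-((1 + ρ) * Real.log (mpow (S x) (1 / (1 + ρ)) * mpow F (ρ / (1 + ρ))).trace.re)) +
          b * (-((1 + ρ) * Real.log (mpow (S x) (1 / (1 + ρ)) *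
            mpow G (ρ / (1 + ρ))).trace.re)) := by
        intro x
        have h1 := (T_concave_K (mpow_psd (hS x).1 (1 / (1 + ρ))) hκ (rho_mem hρ')).2 hF hG ha hb hab
        have hTF := T_pos (hS x) hκ hF hρ'
        have hTG := T_pos (hS x) hκ hG hρ'
        have h2 := strictConcaveOn_log_Ioi.concaveOn.2 hTF hTG ha hb hab
        simp only [smul_eq_mul] at h1 h2
        have hpos := convex_Ioi (0 : ℝ) hTF hTG ha hb hab
        simp only [smul_eq_mul, Set.mem_Ioi] at hpos
        have h3 := Real.log_le_log hpos h1
        have h4 := mul_le_mul_of_nonneg_left (h2.trans h3) (by linarith : 0 ≤ 1 + ρ)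
        linarith
      have hs := Finset.sum_le_sum fun x (_ : x ∈ Finset.univ) =>
        mul_le_mul_of_nonneg_left (hx x) (hP.1 x)
      simp only [smul_eq_mul]
      refine (sub_le_sub_right hs _).trans (le_of_eq ?_)
      exact lin_comb P _ _ a b _ hab
    · intro F hF
      unfold gfun
      refine ContinuousOn.sub (continuousOn_finsetSum _ fun x _ => ?_)
        (continuousOn_id.mul continuousOn_const)
      refine continuousOn_const.mul ?_
      refine (good_ns (hS x) (Kset_posDef hκ hF)).G_cont.congr fun ρ hρ => ?_
      simp only
      rw [trace_mpow (hS x) (Kset_posDef hκ hF) hρ]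
    · intro F hF
      have h1 : ConcaveOn ℝ (Set.Ici (0 : ℝ)) (fun ρ => ∑ x, P x *
          (-((1 + ρ) * Real.log (tA (nsp (hS x).1.1 (Kset_posDef hκ hF).1)
            (nsq (hS x).1.1 (Kset_posDef hκ hF).1) ρ))) - ρ * (r + c)) := by
        refine ⟨convex_Ici 0, fun y hy z hz a b ha hb hab => ?_⟩
        have hs := Finset.sum_le_sum fun x (_ : x ∈ Finset.univ) =>
          mul_le_mul_of_nonneg_left
            ((good_ns (hS x) (Kset_posDef hκ hF)).concave.2 hy hz ha hb hab) (hP.1 x)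
        simp only [smul_eq_mul] at hs ⊢
        refine le_trans (le_of_eq ?_) (sub_le_sub_right hs _)
        simp only [mul_add, Finset.sum_add_distrib, mul_left_comm (P _) a, mul_left_comm (P _) b,
          ← Finset.mul_sum]
        ring
      refine h1.congr fun ρ hρ => ?_
      unfold gfun
      refine congrArg (fun s => s - ρ * (r + c)) ?_
      refine Finset.sum_congr rfl fun x _ => ?_
      rw [trace_mpow (hS x) (Kset_posDef hκ hF) hρ]
    · intro ρ hρ
      have hρ' : (0 : ℝ) ≤ ρ := hρ
      have h1 : E0cc S ρ P - ((ρ * r : ℝ) : EReal) < (t : EReal) :=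
        lt_of_le_of_lt (le_iSup (fun ρ : {ρ : ℝ // 0 ≤ ρ} =>
          E0cc S ρ.1 P - ((ρ.1 * r : ℝ) : EReal)) ⟨ρ, hρ'⟩) h
      have h2 : E0cc S ρ P < ((t + ρ * r : ℝ) : EReal) := by
        rw [EReal.coe_add]
        exact EReal.sub_lt_iff (Or.inl (EReal.coe_ne_bot _)) (Or.inl (EReal.coe_ne_top _)) |>.mp h1
      obtain ⟨⟨F, hF⟩, hF2⟩ := iInf_lt_iff.mp h2
      obtain ⟨hT, hs⟩ := sum_negLog P _ hP.1 _ _ (by linarith : 0 < 1 + ρ) hF2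
      obtain ⟨F', hF', hp⟩ := T_perturb hF hη hη1 (rho_mem hρ')
      refine ⟨F', hF', ?_⟩
      have hx : ∀ x, P x * (-((1 + ρ) * Real.log (mpow (S x) (1 / (1 + ρ)) *
          mpow F' (ρ / (1 + ρ))).trace.re)) ≤ (1 + ρ) * (P x * (-Real.log (mpow (S x) (1 / (1 + ρ)) *
          mpow F (ρ / (1 + ρ))).trace.re)) + (1 + ρ) * c * P x := by
        intro x
        rcases (hP.1 x).eq_or_lt with h0 | h0
        · rw [← h0]; simp
        · have hT' := hT x h0
          have h5 := hp _ (mpow_psd (hS x).1 (1 / (1 + ρ)))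
          have e1 : 1 - η = Real.exp (-c) := by rw [hηd]; ring
          have h6 := Real.log_le_log (mul_pos (by linarith) hT') h5
          rw [Real.log_mul (by linarith) hT'.ne', e1, Real.log_exp] at h6
          have h7 := mul_le_mul_of_nonneg_left h6 (mul_nonneg h0.le (by linarith : 0 ≤ 1 + ρ))
          linarith
      have hs2 := Finset.sum_le_sum fun x (_ : x ∈ Finset.univ) => hx x
      rw [Finset.sum_add_distrib, ← Finset.mul_sum, ← Finset.mul_sum, hP.2] at hs2
      unfold gfun
      linarith
  obtain ⟨F, hF, hF2⟩ := key
  exact ⟨F, Kset_posDef hκ hF, hF.1, fun ρ hρ => hF2 ρ hρ⟩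

end existsF


section final
open Matrix
variable {d n : ℕ}

lemma tens_conj (f : Fin n → Matrix (Fin d) (Fin d) ℂ) :
    (tens f)ᴴ = tens (fun k => (f k)ᴴ) := by
  ext i j
  simp [tens, Matrix.conjTranspose_apply]

open scoped MatrixOrder Matrix.Norms.L2Operator in
lemma tens_psd {F : Matrix (Fin d) (Fin d) ℂ} (hF : F.PosSemidef) :
    ∃ B : Matrix (Fin n → Fin d) (Fin n → Fin d) ℂ, tens (fun _ : Fin n => F) = Bᴴ * B := by
  obtain ⟨B, hB⟩ := CStarAlgebra.nonneg_iff_eq_star_mul_self.mp hF.nonneg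
  refine ⟨tens (fun _ => B), ?_⟩
  rw [tens_conj, tens_mul, hB]
  rfl

lemma trace_psd_gram {ι : Type*} [Fintype ι] [DecidableEq ι] {A : Matrix ι ι ℂ}
    (hA : A.PosSemidef) (B : Matrix ι ι ℂ) : 0 ≤ (A * (Bᴴ * B)).trace.re := by
  rw [← Matrix.mul_assoc, Matrix.trace_mul_comm, ← Matrix.mul_assoc]
  exact (Complex.le_def.mp (hA.mul_mul_conjTranspose_same B).trace_nonneg).1

lemma pigeon {F : Matrix (Fin d) (Fin d) ℂ} (hF : F.PosSemidef) (hF1 : F.trace = 1) {M : ℕ}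
    {Pv : Fin M → Matrix (Fin n → Fin d) (Fin n → Fin d) ℂ} (hPv : IsPOVM Pv) {b : ℝ}
    (hb : Real.exp b ≤ M) :
    ∃ m, (Pv m * tens (fun _ => F)).trace.re ≤ Real.exp (-b) := by
  by_contra hc
  push Not at hc
  obtain ⟨B, hB⟩ := tens_psd (n := n) hF
  have h1 := trace_psd_gram hPv.2 B
  rw [← hB, Matrix.sub_mul, Matrix.one_mul, Matrix.trace_sub, Complex.sub_re, tens_trace,
    Matrix.sum_mul, Matrix.trace_sum, Complex.re_sum] at h1
  simp only [hF1, Finset.prod_const_one, Complex.one_re] at h1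
  have hM : 0 < M := by
    have : (0 : ℝ) < M := (Real.exp_pos b).trans_le hb
    exact_mod_cast this
  have : Nonempty (Fin M) := ⟨⟨0, hM⟩⟩
  have h2 := Finset.sum_lt_sum_of_nonempty (Finset.univ_nonempty) fun m _ => hc m
  rw [Finset.sum_const, Finset.card_univ, Fintype.card_fin, nsmul_eq_mul] at h2
  have h3 := mul_le_mul_of_nonneg_right hb (Real.exp_pos (-b)).le
  rw [← Real.exp_add, add_neg_cancel, Real.exp_zero] at h3
  linarith

lemma signal_eq {X : Type*} (S : X → Matrix (Fin d) (Fin d) ℂ) (w : Fin n → X) :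
    signalState S w = tens (fun k => S (w k)) := rfl

lemma ns_word {X : Type*} (S : X → Matrix (Fin d) (Fin d) ℂ) (hS : ∀ x, IsDensity (S x))
    {F : Matrix (Fin d) (Fin d) ℂ} (hF : F.PosDef) (w : Fin n → X)
    {L : Matrix (Fin n → Fin d) (Fin n → Fin d) ℂ} (hL : L.PosSemidef) (hL1 : (1 - L).PosSemidef)
    {γ : ℝ} (hγ : 0 ≤ γ) :
    1 / 2 * ∑ z : Fin n → Fin d × Fin d, min (∏ k, nsp (hS (w k)).1.1 hF.1 (z k))
      (γ * ∏ k, nsq (hS (w k)).1.1 hF.1 (z k)) ≤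
    1 - (L * signalState S w).trace.re + γ * (L * tens (fun _ => F)).trace.re := by
  have h := ns_tensor L hL hL1
    (fun k => ((hS (w k)).1.1.eigenvectorUnitary : Matrix (Fin d) (Fin d) ℂ))
    (fun _ => (hF.1.eigenvectorUnitary : Matrix (Fin d) (Fin d) ℂ))
    (fun k => unit_mul_conj _) (fun k => unit_mul_conj _)
    (fun k => (hS (w k)).1.1.eigenvalues) (fun _ => hF.1.eigenvalues)
    (fun k i => (hS (w k)).1.eigenvalues_nonneg i) (fun k i => (hF.eigenvalues_pos i).le) γ hγ
  simp only [← spec_eq] at h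
  rw [Matrix.sub_mul, Matrix.one_mul, Matrix.trace_sub, Complex.sub_re, tens_trace] at h
  simp only [(hS _).2, Finset.prod_const_one, Complex.one_re] at h
  exact h

lemma sum_word {X : Type*} [Fintype X] [DecidableEq X] (hn : 0 < n) (w : Fin n → X) (a : X → ℝ) :
    ∑ k, a (w k) = n * ∑ x, composition w x * a x := by
  have hn' : (n : ℝ) ≠ 0 := by exact_mod_cast hn.ne'
  rw [Finset.mul_sum, ← Finset.sum_fiberwise Finset.univ w]
  refine Finset.sum_congr rfl fun x _ => ?_
  rw [Finset.sum_congr rfl (g := fun _ => a x)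
    (fun k hk => by rw [(Finset.mem_filter.mp hk).2]), Finset.sum_const, nsmul_eq_mul]
  unfold composition
  field_simp

lemma maxError_ge {X : Type*} {M : ℕ} (S : X → Matrix (Fin d) (Fin d) ℂ) (w : Fin M → Fin n → X)
    (Pv : Fin M → Matrix (Fin n → Fin d) (Fin n → Fin d) ℂ) (m : Fin M) :
    1 - (Matrix.trace (Pv m * signalState S (w m))).re ≤ maxError S w Pv :=
  le_ciSup (f := fun m : Fin M => (1 - (Matrix.trace (Pv m * signalState S (w m))).re))
    (Set.finite_range _).bddAbove m

lemma povm_le_one {ι : Type*} [Fintype ι] [DecidableEq ι] {M : ℕ}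
    {Pv : Fin M → Matrix ι ι ℂ} (h : IsPOVM Pv) (m : Fin M) : (1 - Pv m).PosSemidef := by
  have h1 : (∑ i ∈ Finset.univ.erase m, Pv i).PosSemidef :=
    Matrix.posSemidef_sum _ fun i _ => h.1 i
  have h2 := h.2.add h1
  rw [← Finset.add_sum_erase _ _ (Finset.mem_univ m)] at h2
  convert h2 using 1
  abel

lemma code_bound {X : Type*} [Fintype X] [DecidableEq X]
    (S : X → Matrix (Fin d) (Fin d) ℂ) (hS : ∀ x, IsDensity (S x))
    {F : Matrix (Fin d) (Fin d) ℂ} (hF : F.PosDef) (hF1 : F.trace = 1)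
    (ρ : ℝ) (hρ : 0 ≤ ρ) (δ : ℝ) (hδ : 0 < δ) :
    ∃ N : ℕ, ∀ n, N ≤ n → 0 < n → ∀ (M : ℕ) (w : Fin M → Fin n → X)
      (Pv : Fin M → Matrix (Fin n → Fin d) (Fin n → Fin d) ℂ) (R : ℝ) (Q : X → ℝ),
      Real.exp (n * R) ≤ M → (∀ m, composition (w m) = Q) → IsPOVM Pv →
      n * (∑ x, Q x * kl (tV (nsp (hS x).1.1 hF.1) (nsq (hS x).1.1 hF.1) ρ)
        (nsq (hS x).1.1 hF.1) + δ) + Real.log 8 ≤ n * R →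
      1 / 8 * Real.exp (-(n * (∑ x, Q x * kl (tV (nsp (hS x).1.1 hF.1) (nsq (hS x).1.1 hF.1) ρ)
        (nsp (hS x).1.1 hF.1) + δ))) ≤ maxError S w Pv := by
  have hg := fun x => good_ns (hS x) hF
  obtain ⟨N, hN⟩ := classical_converse (fun x => nsp (hS x).1.1 hF.1) (fun x => nsq (hS x).1.1 hF.1)
    (fun x => tV (nsp (hS x).1.1 hF.1) (nsq (hS x).1.1 hF.1) ρ) (fun x => (hg x).hp0)
    (fun x => (hg x).hq0) (fun x => (hg x).tV_nonneg ρ) (fun x => (hg x).tV_sum ρ)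
    (fun x z hz => (hg x).tV_pos_p hρ hz)
    (fun x z hz => (hg x).hpq z ((hg x).tV_pos_p hρ hz)) δ hδ
  refine ⟨N, fun n hn hn0 M w Pv R Q hM hQ hPv hR => ?_⟩
  obtain ⟨m, hm⟩ := pigeon hF.posSemidef hF1 hPv hM
  refine le_trans ?_ (maxError_ge S w Pv m)
  set DP := ∑ x, Q x * kl (tV (nsp (hS x).1.1 hF.1) (nsq (hS x).1.1 hF.1) ρ)
        (nsp (hS x).1.1 hF.1) with hDP
  set DQ := ∑ x, Q x * kl (tV (nsp (hS x).1.1 hF.1) (nsq (hS x).1.1 hF.1) ρ)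
        (nsq (hS x).1.1 hF.1) with hDQ
  set A := Real.exp (-(n * (DP + δ))) with hA
  have hA0 : 0 < A := Real.exp_pos _
  have hγ : 0 ≤ 1 / 8 * A * Real.exp (n * R) := by positivity
  have h1 := hN n hn (w m) _ hγ
  have h2 := ns_word S hS hF (w m) (hPv.1 m) (povm_le_one hPv m) hγ
  have e1 := sum_word hn0 (w m) (fun x => kl (tV (nsp (hS x).1.1 hF.1) (nsq (hS x).1.1 hF.1) ρ)
        (nsp (hS x).1.1 hF.1))
  have e2 := sum_word hn0 (w m) (fun x => kl (tV (nsp (hS x).1.1 hF.1) (nsq (hS x).1.1 hF.1) ρ)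
        (nsq (hS x).1.1 hF.1))
  simp only [hQ m] at e1 e2
  rw [← hDP] at e1
  rw [← hDQ] at e2
  unfold kl at e1 e2
  rw [e1, e2] at h1
  have e3 : -(n * DP) - n * δ = -(n * (DP + δ)) := by ring
  rw [e3, ← hA] at h1
  have h3 : A ≤ 1 / 8 * A * Real.exp (n * R) * Real.exp (-(n * DQ) - n * δ) := by
    have h8 : (8 : ℝ) ≤ Real.exp (n * R) * Real.exp (-(n * DQ) - n * δ) := by
      rw [← Real.exp_add, ← Real.log_le_iff_le_exp (by norm_num)]
      linarith
    have := mul_le_mul_of_nonneg_left h8 hA0.le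
    linarith
  rw [min_eq_left h3] at h1
  have h4 := mul_le_mul_of_nonneg_left hm hγ
  have h5 : 1 / 8 * A * Real.exp (n * R) * Real.exp (-(n * R)) = 1 / 8 * A := by
    rw [mul_assoc, ← Real.exp_add, add_neg_cancel, Real.exp_zero, mul_one]
  rw [h5] at h4
  linarith

lemma Pemax_ge {X : Type*} [Fintype X] [DecidableEq X]
    (S : X → Matrix (Fin d) (Fin d) ℂ) (R : ℝ) (Q : X → ℝ) (hQ : ∃ w : Fin n → X, composition w = Q)
    (b : ℝ) (h : ∀ (M : ℕ) (w : Fin M → Fin n → X)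
      (Pv : Fin M → Matrix (Fin n → Fin d) (Fin n → Fin d) ℂ),
      Real.exp (n * R) ≤ M → (∀ m, composition (w m) = Q) → IsPOVM Pv → b ≤ maxError S w Pv) :
    b ≤ Pemax S n R Q := by
  unfold Pemax
  refine le_csInf ?_ ?_
  · obtain ⟨w, hw⟩ := hQ
    refine ⟨_, ⌈Real.exp (n * R)⌉₊, fun _ => w, fun _ => 0, Nat.le_ceil _, fun _ => hw, ?_, rfl⟩
    refine ⟨fun _ => PosSemidef.zero, ?_⟩
    simpa using PosSemidef.one
  · rintro e ⟨M, w, Pv, h1, h2, h3, rfl⟩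
    exact h M w Pv h1 h2 h3

lemma negLog_le {b y : ℝ} (hb : 0 < b) (h : b ≤ y) : negLog y ≤ ((-Real.log b : ℝ) : EReal) := by
  unfold negLog
  rw [if_neg (not_le.mpr (hb.trans_le h))]
  exact_mod_cast neg_le_neg (Real.log_le_log hb h)

end final

/-- **Sphere packing bound for constant composition codes over classical-quantum
channels**: `E(R,P) ≤ E_sp^cc(R-ε, P)`. -/
theorem sphere_packing_bound_constant_composition
    {X : Type*} [Fintype X] [DecidableEq X] {d : ℕ}
    (S : X → Matrix (Fin d) (Fin d) ℂ) (hS : ∀ x, IsDensity (S x))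
    (P : X → ℝ) (hP : IsProbDist P)
    (R : ℝ) (hR : 0 < R) (ε : ℝ) (hε : 0 < ε) (hεR : ε < R) :
    relE S R P ≤ Espcc S (R - ε) P := by
  refine EReal.le_of_forall_lt_iff_le.mp fun t ht => ?_
  obtain ⟨t0, ht0, htt⟩ := EReal.lt_iff_exists_real_btwn.mp ht
  have htt' : t0 < t := by exact_mod_cast htt
  obtain ⟨c, hc, hc1, hc2⟩ : ∃ c : ℝ, 0 < c ∧ c ≤ ε / 8 ∧ c ≤ (t - t0) / 4 :=
    ⟨min (ε / 8) ((t - t0) / 4), lt_min (by linarith) (by linarith), min_le_left _ _,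
      min_le_right _ _⟩
  obtain ⟨F, hF, hF1, hF2⟩ := exists_F S hS P hP (R - ε) c t0 hc ht0
  obtain ⟨ρ, hρ, hDP, hDQ⟩ := exists_tilt P hP.1 (fun x => nsp (hS x).1.1 hF.1)
    (fun x => nsq (hS x).1.1 hF.1) (fun x => good_ns (hS x) hF) (R - ε + c) (R - ε / 2) (t0 + c)
    (by linarith) (fun ρ hρ => by
      have := hF2 ρ hρ
      unfold gfun at this
      simp only [trace_mpow (hS _) hF hρ] at this
      exact this)
  obtain ⟨N, hN⟩ := code_bound S hS hF hF1 ρ hρ c hc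
  unfold relE
  refine iSup_le fun ⟨Pn, hPn, hw⟩ => ?_
  refine Filter.limsup_le_of_le (by isBoundedDefault) ?_
  have hlim : ∀ a : X → ℝ, Filter.Tendsto (fun n => ∑ x, Pn n x * a x) Filter.atTop
      (nhds (∑ x, P x * a x)) := fun a =>
    tendsto_finsetSum _ fun x _ => (((tendsto_pi_nhds.mp hPn) x).mul_const (a x))
  have ev1 := (hlim _).eventually_lt_const (lt_of_le_of_lt hDP (by linarith : t0 + c < t0 + 2 * c))
  have ev2 := (hlim _).eventually_lt_const
    (lt_of_le_of_lt hDQ (by linarith : R - ε / 2 < R - 3 * ε / 8))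
  have hn : Filter.Tendsto (fun n : ℕ => (n : ℝ)) Filter.atTop Filter.atTop :=
    tendsto_natCast_atTop_atTop
  filter_upwards [ev1, ev2, hn.eventually_ge_atTop (Real.log 8 / c), Filter.eventually_ge_atTop N,
    Filter.eventually_gt_atTop 0] with n h1 h2 h3 h4 h5
  have hn0 : (0 : ℝ) < n := by exact_mod_cast h5
  rw [div_le_iff₀ hc] at h3
  set DP := ∑ x, Pn n x * kl (tV (nsp (hS x).1.1 hF.1) (nsq (hS x).1.1 hF.1) ρ)
        (nsp (hS x).1.1 hF.1) with hDP
  have hb : 1 / 8 * Real.exp (-(n * (DP + c))) ≤ Pemax S n R (Pn n) := by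
    refine Pemax_ge S R (Pn n) (hw n) _ fun M w Pv g1 g2 g3 => ?_
    refine hN n h4 h5 M w Pv R (Pn n) g1 g2 g3 ?_
    have := mul_le_mul_of_nonneg_left (a := (n : ℝ)) (h2.le.trans
      (by linarith : R - 3 * ε / 8 ≤ R - c - c)) hn0.le
    linarith
  have hb2 := negLog_le (by positivity) hb
  have hinv : (0 : EReal) ≤ (((n : ℝ)⁻¹ : ℝ) : EReal) := by
    exact_mod_cast (inv_pos.mpr hn0).le
  refine (mul_le_mul_of_nonneg_left hb2 hinv).trans ?_
  rw [← EReal.coe_mul]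
  norm_cast
  rw [Real.log_mul (by norm_num) (Real.exp_pos _).ne', Real.log_exp, one_div, Real.log_inv,
    inv_mul_le_iff₀ hn0]
  have := mul_le_mul_of_nonneg_left (a := (n : ℝ))
    (by linarith : DP + c + c ≤ t) hn0.le
  linarith

end SPB
end
end

section
/- For a pure-state classical-quantum channel, the constant-composition E_0 coefficient is bounded by the cutoff rate: if S_x = |ψ_x⟩⟨ψ_x| is a rank-one projection for every x ∈ X, then for every probability distribution P on X and every ρ ≥ 0, E_0^cc(ρ,P) ≤ (1+ρ) R_∞(P), where R_∞(P) = min over density operators F on H of −Σ_{x∈X} P(x) log Tr(S_x F). -/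
open scoped BigOperators ComplexOrder
noncomputable section

namespace SPB

/-- The pure state (rank-one projection) `|ψ⟩⟨ψ|` associated with a vector `ψ ∈ ℂ^d`. -/
def pureState {d : ℕ} (ψ : Fin d → ℂ) : Matrix (Fin d) (Fin d) ℂ :=
  Matrix.of fun i j => ψ i * (starRingEnd ℂ) (ψ j)

/-- The cutoff rate `R_∞(P) = min_F -∑ₓ P(x) log Tr(Sₓ F)` (for pure-state channels). -/
def RinfPure {X : Type*} [Fintype X] {d : ℕ} (S : X → Matrix (Fin d) (Fin d) ℂ)
    (P : X → ℝ) : EReal :=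
  ⨅ F : {F : Matrix (Fin d) (Fin d) ℂ // IsDensity F},
    ∑ x, ((P x : ℝ) : EReal) * negLog ((Matrix.trace (S x * F.1)).re)


lemma aux_spec {d : ℕ} (A : Matrix (Fin d) (Fin d) ℂ) (hA : A.IsHermitian) :
    A = (hA.eigenvectorUnitary : Matrix (Fin d) (Fin d) ℂ) *
      Matrix.diagonal (fun i => ((hA.eigenvalues i : ℝ) : ℂ)) *
      (star (hA.eigenvectorUnitary : Matrix (Fin d) (Fin d) ℂ)) := by
  have h := hA.spectral_theorem
  rw [Unitary.conjStarAlgAut_apply] at h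
  exact h

lemma pureState_eq {d : ℕ} (ψ : Fin d → ℂ) :
    pureState ψ = Matrix.vecMulVec ψ (star ψ) := rfl

lemma pureState_herm {d : ℕ} (ψ : Fin d → ℂ) : (pureState ψ).IsHermitian := by
  rw [pureState_eq]
  exact (Matrix.posSemidef_vecMulVec_self_star ψ).1

lemma pureState_idem {d : ℕ} (ψ : Fin d → ℂ) (h : ∑ i, Complex.normSq (ψ i) = 1) :
    pureState ψ * pureState ψ = pureState ψ := by
  have h1 : star ψ ⬝ᵥ ψ = 1 := by
    have : star ψ ⬝ᵥ ψ = ((∑ i, Complex.normSq (ψ i) : ℝ) : ℂ) := by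
      push_cast
      refine Finset.sum_congr rfl fun i _ => ?_
      rw [Complex.normSq_eq_conj_mul_self]
      rfl
    rw [this, h]; simp
  rw [pureState_eq, Matrix.vecMulVec_mul_vecMulVec, h1]
  simp

lemma mpow_pureState {d : ℕ} (ψ : Fin d → ℂ) (h : ∑ i, Complex.normSq (ψ i) = 1) (r : ℝ) :
    mpow (pureState ψ) r = pureState ψ := by
  have hA := pureState_herm ψ
  have hI := pureState_idem ψ h
  generalize pureState ψ = A at hA hI
  have key : ∀ i, hA.eigenvalues i = 0 ∨ hA.eigenvalues i = 1 := by
    intro i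
    have h1 := hA.mulVec_eigenvectorBasis i
    have h2 : A.mulVec (A.mulVec (hA.eigenvectorBasis i)) =
        A.mulVec (hA.eigenvectorBasis i) := by
      rw [Matrix.mulVec_mulVec, hI]
    rw [h1, Matrix.mulVec_smul, h1, smul_smul, ← sub_eq_zero, ← sub_smul] at h2
    rcases smul_eq_zero.1 h2 with h3 | h3
    · have : hA.eigenvalues i * (hA.eigenvalues i - 1) = 0 := by linarith
      rcases mul_eq_zero.1 this with h4 | h4
      · exact Or.inl h4
      · exact Or.inr (by linarith)
    · exfalso
      apply hA.eigenvectorBasis.orthonormal.ne_zero i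
      ext j
      exact congrFun h3 j
  rw [mpow, dif_pos hA]
  conv_rhs => rw [aux_spec A hA]
  congr 3
  ext i
  rcases key i with h | h <;> simp [h]

lemma trace_pure_mul {d : ℕ} (ψ : Fin d → ℂ) (M : Matrix (Fin d) (Fin d) ℂ) :
    (pureState ψ * M).trace = star ψ ⬝ᵥ M.mulVec ψ := by
  rw [Matrix.trace_mul_comm, pureState_eq, Matrix.mul_vecMulVec, Matrix.trace_vecMulVec,
    dotProduct_comm]

lemma mpow_sub_posSemidef {d : ℕ} (F : Matrix (Fin d) (Fin d) ℂ) (hF : IsDensity F) (s : ℝ)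
    (hs : s ≤ 1) : (mpow F s - F).PosSemidef := by
  obtain ⟨hp, ht⟩ := hF
  have hA := hp.1
  have h0 : ∀ i, 0 ≤ hA.eigenvalues i := hp.eigenvalues_nonneg
  have hsum : ∑ i, hA.eigenvalues i = 1 := by
    have := hA.trace_eq_sum_eigenvalues
    rw [ht] at this
    have h2 : ((∑ i, hA.eigenvalues i : ℝ) : ℂ) = 1 := by
      push_cast
      exact this.symm
    exact_mod_cast h2
  have h1 : ∀ i, hA.eigenvalues i ≤ 1 := fun i => by
    rw [← hsum]
    exact Finset.single_le_sum (fun j _ => h0 j) (Finset.mem_univ i)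
  have e : mpow F s - F = (hA.eigenvectorUnitary : Matrix (Fin d) (Fin d) ℂ) *
      Matrix.diagonal (fun i => (((if hA.eigenvalues i = 0 then (0 : ℝ)
        else hA.eigenvalues i ^ s) - hA.eigenvalues i : ℝ) : ℂ)) *
      (hA.eigenvectorUnitary : Matrix (Fin d) (Fin d) ℂ).conjTranspose := by
    rw [mpow, dif_pos hA]
    conv_lhs => rw [sub_eq_add_neg]; arg 2; rw [aux_spec F hA]
    rw [← sub_eq_add_neg, ← sub_mul, ← mul_sub, Matrix.diagonal_sub]
    simp only [Complex.ofReal_sub]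
    rfl
  rw [e]
  refine Matrix.PosSemidef.mul_mul_conjTranspose_same (Matrix.PosSemidef.diagonal ?_) _
  intro i
  simp only [Pi.zero_apply]
  rw [Complex.zero_le_real]
  split_ifs with h
  · simp [h]
  · have hpos := lt_of_le_of_ne (h0 i) (Ne.symm h)
    have := Real.rpow_le_rpow_of_exponent_ge hpos (h1 i) hs
    rw [Real.rpow_one] at this
    linarith

lemma negLog_anti {a b : ℝ} (h : a ≤ b) : negLog b ≤ negLog a := by
  unfold negLog
  split_ifs with h1 h2 h2
  · exact le_rfl
  · exact absurd (h.trans h1) h2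
  · exact le_top
  · push Not at h2
    exact_mod_cast neg_le_neg (Real.log_le_log h2 h)

/-- **For a pure-state classical-quantum channel, the constant-composition `E₀` coefficient is
bounded by the cutoff rate**: `E₀^cc(ρ,P) ≤ (1+ρ) R_∞(P)`. -/
theorem E0cc_le_one_add_rho_mul_Rinf
    {X : Type*} [Fintype X] [DecidableEq X] {d : ℕ}
    (ψ : X → Fin d → ℂ) (hψ : ∀ x, ∑ i, Complex.normSq (ψ x i) = 1)
    (P : X → ℝ) (hP : IsProbDist P) (ρ : ℝ) (hρ : 0 ≤ ρ) :
    E0cc (fun x => pureState (ψ x)) ρ P ≤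
      ((1 + ρ : ℝ) : EReal) * RinfPure (fun x => pureState (ψ x)) P := by
  have hpos : (0 : ℝ) < 1 + ρ := by linarith
  have hs : ρ / (1 + ρ) ≤ 1 := by rw [div_le_one hpos]; linarith
  have hpE : (0 : EReal) < ((1 + ρ : ℝ) : EReal) := by exact_mod_cast hpos
  rw [← EReal.div_le_iff_le_mul hpE (EReal.coe_ne_top _)]
  refine le_iInf fun F => ?_
  rw [EReal.div_le_iff_le_mul hpE (EReal.coe_ne_top _)]
  refine (iInf_le _ F).trans ?_
  refine mul_le_mul_of_nonneg_left ?_ hpE.le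
  refine Finset.sum_le_sum fun x _ => ?_
  refine mul_le_mul_of_nonneg_left (negLog_anti ?_) (by exact_mod_cast hP.1 x)
  rw [mpow_pureState _ (hψ x), trace_pure_mul, trace_pure_mul]
  have h := (mpow_sub_posSemidef F.1 F.2 _ hs).dotProduct_mulVec_nonneg (ψ x)
  rw [Matrix.sub_mulVec, dotProduct_sub, sub_nonneg] at h
  exact (Complex.le_def.1 h).1


end SPB
end
end
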